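/- arXiv:1709.00210 — 4 statements merged into one kernel-verified Lean document; each statement's English description precedes it below -/
import Mathlib

section
/- Let 0 < α < 1 and let A be a real s×s matrix all of whose (complex) eigenvalues λ satisfy λ ≠ 0 and |arg λ| > απ/2. Then there exist t₀ > 0 and a positive constant M such that for all t ≥ t₀ one has t^{α-1} ‖E_{α,α}(t^α A)‖ ≤ M / t^{α+1}, where ‖·‖ denotes the operator (matrix) norm. -/
open Filter Topology

attribute [local instance] Matrix.linftyOpNormedAddCommGroup Matrix.linftyOpNormedRing

/-- The matrix Mittag-Leffler function `E_{α,β}(B) = ∑ Bᵏ / Γ(αk + β)`. -/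
noncomputable def ML {s : ℕ} (α β : ℝ) (B : Matrix (Fin s) (Fin s) ℝ) :
    Matrix (Fin s) (Fin s) ℝ :=
  ∑' k : ℕ, (Real.Gamma (α * k + β))⁻¹ • B ^ k

/-!
Write `R(x) = (x - A)⁻¹`. The function `t ^ (α - 1) • E_{α,α}(t ^ α A)` has Laplace transform
`R(s ^ α)`, so its product with `t ^ 2` has as transform the second derivative of `R(s ^ α)`. For
`Re s > 0` the power `s ^ α` stays in the closed sector `|arg| ≤ απ/2`, which avoids the spectrum
and contains `0`; hence `R(s ^ α)` and `s ^ α R(s ^ α)` are bounded there and the second derivative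
is `O(|s| ^ (α - 2))`. This is integrable along vertical lines because `α < 1`, and the Bromwich
integral over `Re s = 1 / t` is then `O(t ^ (1 - α))`.
-/

section VerticalLine

open Complex MeasureTheory

variable {c p : ℝ}

theorem norm_vertical_rpow_neg (hc : 0 < c) (p y : ℝ) :
    ‖(c + y * I : ℂ)‖ ^ (-p) = c ^ (-p) * (1 + ‖y / c‖ ^ 2) ^ (-p / 2) := by
  have norm_eq : ‖(c + y * I : ℂ)‖ = c * (1 + ‖y / c‖ ^ 2) ^ (1 / 2 : ℝ) := by
    have sq_add_sq_eq : c ^ 2 + y ^ 2 = c ^ 2 * (1 + ‖y / c‖ ^ 2) := by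
      rw [Real.norm_eq_abs, sq_abs]
      field_simp
    rw [norm_add_mul_I, ← Real.sqrt_eq_rpow, sq_add_sq_eq, Real.sqrt_mul (by positivity),
      Real.sqrt_sq hc.le]
  rw [norm_eq, Real.mul_rpow hc.le (by positivity), ← Real.rpow_mul (by positivity)]
  ring_nf

theorem integrable_norm_vertical_rpow_neg (hc : 0 < c) (hp : 1 < p) :
    Integrable fun y : ℝ ↦ ‖(c + y * I : ℂ)‖ ^ (-p) := by
  simp_rw [norm_vertical_rpow_neg hc]
  have h : Integrable fun x : ℝ ↦ (1 + ‖x‖ ^ 2) ^ (-p / 2) :=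
    integrable_rpow_neg_one_add_norm_sq (by simpa using hp)
  exact (h.comp_div hc.ne').const_mul _

theorem integral_norm_vertical_rpow_neg (hc : 0 < c) (p : ℝ) :
    ∫ y : ℝ, ‖(c + y * I : ℂ)‖ ^ (-p) = c ^ (1 - p) * ∫ x : ℝ, (1 + ‖x‖ ^ 2) ^ (-p / 2) := by
  simp_rw [norm_vertical_rpow_neg hc]
  rw [integral_const_mul, Measure.integral_comp_div (fun x : ℝ ↦ (1 + ‖x‖ ^ 2) ^ (-p / 2)),
    abs_of_pos hc, smul_eq_mul, ← mul_assoc, sub_eq_neg_add, Real.rpow_add hc, Real.rpow_one]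

theorem le_norm_vertical (c y : ℝ) : c ≤ ‖(c + y * I : ℂ)‖ := by
  simpa using (c + y * I : ℂ).re_le_norm

theorem continuous_vertical_cpow (hc : 0 < c) (z : ℂ) :
    Continuous fun y : ℝ ↦ (c + y * I : ℂ) ^ z :=
  .cpow (by fun_prop) continuous_const fun y ↦ .inl (by simpa using hc)

end VerticalLine

section InverseLaplace

open Complex MeasureTheory

variable {E : Type*} [NormedAddCommGroup E] [NormedSpace ℂ E] {f : ℂ → E} {c d p t C : ℝ}

/-- The Bromwich integral `(2πi)⁻¹ ∫ exp (s t) f(s) ds` along the vertical line `Re s = c`, written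
as an integral over `y` where `s = c + iy`. It inverts the Laplace transform. -/
noncomputable def inverseLaplace (f : ℂ → E) (c t : ℝ) : E :=
  (2 * Real.pi)⁻¹ • ∫ y : ℝ, cexp ((c + y * I) * t) • f (c + y * I)

theorem norm_cexp_mul_ofReal (s : ℂ) (t : ℝ) : ‖cexp (s * t)‖ = Real.exp (s.re * t) := by
  simp [norm_exp]

theorem inverseLaplace_smul_const [CompleteSpace E] (f : ℂ → ℂ) (v : E) (c t : ℝ) :
    inverseLaplace (fun s ↦ f s • v) c t = inverseLaplace f c t • v := by
  simp_rw [inverseLaplace, ← smul_assoc, integral_smul_const, smul_assoc]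

theorem norm_cexp_smul_vertical_le (t : ℝ)
    (hb : ∀ y : ℝ, ‖f (c + y * I)‖ ≤ C * ‖(c + y * I : ℂ)‖ ^ (-p)) (y : ℝ) :
    ‖cexp ((c + y * I) * t) • f (c + y * I)‖ ≤
      Real.exp (c * t) * C * ‖(c + y * I : ℂ)‖ ^ (-p) := by
  have norm_exp_eq : ‖cexp ((c + y * I) * t)‖ = Real.exp (c * t) := by
    simp [norm_cexp_mul_ofReal]
  rw [norm_smul, norm_exp_eq, mul_assoc]
  gcongr
  exact hb y

theorem integrable_cexp_smul_vertical (t : ℝ) (hc : 0 < c) (hp : 1 < p)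
    (hf : Continuous fun y : ℝ ↦ f (c + y * I))
    (hb : ∀ y : ℝ, ‖f (c + y * I)‖ ≤ C * ‖(c + y * I : ℂ)‖ ^ (-p)) :
    Integrable fun y : ℝ ↦ cexp ((c + y * I) * t) • f (c + y * I) :=
  ((integrable_norm_vertical_rpow_neg hc hp).const_mul (Real.exp (c * t) * C)).mono'
    (Continuous.smul (by fun_prop) hf).aestronglyMeasurable
    (.of_forall (norm_cexp_smul_vertical_le t hb))

theorem norm_inverseLaplace_le (t : ℝ) (hc : 0 < c) (hp : 1 < p)
    (hb : ∀ y : ℝ, ‖f (c + y * I)‖ ≤ C * ‖(c + y * I : ℂ)‖ ^ (-p)) :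
    ‖inverseLaplace f c t‖ ≤ (2 * Real.pi)⁻¹ *
      (Real.exp (c * t) * C * (c ^ (1 - p) * ∫ x : ℝ, (1 + ‖x‖ ^ 2) ^ (-p / 2))) := by
  rw [inverseLaplace, norm_smul, Real.norm_of_nonneg (by positivity),
    ← integral_norm_vertical_rpow_neg hc, ← integral_const_mul]
  gcongr
  exact norm_integral_le_of_norm_le ((integrable_norm_vertical_rpow_neg hc hp).const_mul _)
    (.of_forall (norm_cexp_smul_vertical_le t hb))

theorem norm_inverseLaplace_inv_le (ht : 0 < t) (hp : 1 < p)
    (hb : ∀ s : ℂ, 0 < s.re → ‖f s‖ ≤ C * ‖s‖ ^ (-p)) :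
    ‖inverseLaplace f t⁻¹ t‖ ≤ (2 * Real.pi)⁻¹ *
      (Real.exp 1 * C * ∫ x : ℝ, (1 + ‖x‖ ^ 2) ^ (-p / 2)) * t ^ (p - 1) := by
  have rpow_eq : t⁻¹ ^ (1 - p) = t ^ (p - 1) := by
    rw [Real.inv_rpow ht.le, ← Real.rpow_neg ht.le, neg_sub]
  have h := norm_inverseLaplace_le (f := f) t (inv_pos.2 ht) hp
    fun y ↦ hb _ (by simpa using ht)
  rw [inv_mul_cancel₀ ht.ne', rpow_eq] at h
  exact h.trans_eq (by ring)

theorem hasSum_inverseLaplace {F : ℕ → ℂ → E} {b : ℕ → ℝ} (t : ℝ) (hc : 0 < c) (hp : 1 < p)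
    (hF : ∀ k, Continuous fun y : ℝ ↦ F k (c + y * I))
    (hb : ∀ k, ∀ y : ℝ, ‖F k (c + y * I)‖ ≤ b k * ‖(c + y * I : ℂ)‖ ^ (-p)) (hsum : Summable b)
    (hf : ∀ y : ℝ, HasSum (fun k ↦ F k (c + y * I)) (f (c + y * I))) :
    HasSum (fun k ↦ inverseLaplace (F k) c t) (inverseLaplace f c t) := by
  have bound_summable (y : ℝ) :
      Summable fun k ↦ Real.exp (c * t) * b k * ‖(c + y * I : ℂ)‖ ^ (-p) :=
    (hsum.mul_left _).mul_right _
  refine HasSum.const_smul _ (hasSum_integral_of_dominated_convergence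
    (fun k y ↦ Real.exp (c * t) * b k * ‖(c + y * I : ℂ)‖ ^ (-p))
    (fun k ↦ (Continuous.smul (by fun_prop) (hF k)).aestronglyMeasurable)
    (fun k ↦ .of_forall (norm_cexp_smul_vertical_le t (hb k)))
    (.of_forall bound_summable) ?_ (.of_forall fun y ↦ (hf y).const_smul _))
  simp_rw [tsum_mul_right]
  exact (integrable_norm_vertical_rpow_neg hc hp).const_mul _

theorem tendsto_horizontal_integral_zero {u : ℝ → ℝ} (hu : ∀ T, |u T| = |T|) (hp : 0 < p)
    (ht : 0 ≤ t) (hc : 0 < c) (hcd : c ≤ d)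
    (hb : ∀ s : ℂ, 0 < s.re → ‖f s‖ ≤ C * ‖s‖ ^ (-p)) :
    Tendsto (fun T : ℝ ↦ ∫ x in c..d, cexp ((x + u T * I) * t) • f (x + u T * I)) atTop (𝓝 0) := by
  have C_nonneg : 0 ≤ C := by simpa using (norm_nonneg _).trans (hb 1 (by simp))
  have bound_tendsto :
      Tendsto (fun T : ℝ ↦ Real.exp (d * t) * (C * T ^ (-p)) * |d - c|) atTop (𝓝 0) := by
    simpa using (((tendsto_rpow_neg_atTop hp).const_mul C).const_mul
      (Real.exp (d * t))).mul_const |d - c|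
  refine squeeze_zero_norm' ?_ bound_tendsto
  filter_upwards [eventually_gt_atTop 0] with T hT
  refine intervalIntegral.norm_integral_le_of_norm_le_const fun x hx ↦ ?_
  rw [Set.uIoc_of_le hcd] at hx
  have le_norm : T ≤ ‖(x + u T * I : ℂ)‖ := by
    simpa [hu, abs_of_pos hT] using abs_im_le_norm (x + u T * I : ℂ)
  have exp_le : ‖cexp ((x + u T * I) * t)‖ ≤ Real.exp (d * t) := by
    rw [norm_cexp_mul_ofReal]
    gcongr
    simpa using hx.2
  rw [norm_smul]
  gcongr
  calc ‖f (x + u T * I)‖ ≤ C * ‖(x + u T * I : ℂ)‖ ^ (-p) := hb _ (by simpa using hc.trans hx.1)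
    _ ≤ C * T ^ (-p) := by
      gcongr ?_ * ?_
      exact Real.rpow_le_rpow_of_nonpos hT le_norm (by linarith)

theorem inverseLaplace_eq_of_le [CompleteSpace E] (hp : 1 < p) (ht : 0 ≤ t)
    (hf : DifferentiableOn ℂ f {s | 0 < s.re})
    (hb : ∀ s : ℂ, 0 < s.re → ‖f s‖ ≤ C * ‖s‖ ^ (-p)) (hc : 0 < c) (hcd : c ≤ d) :
    inverseLaplace f c t = inverseLaplace f d t := by
  have vertical_tendsto {σ : ℝ} (hσ : 0 < σ) :
      Tendsto (fun T : ℝ ↦ ∫ y in (-T)..T, cexp ((σ + y * I) * t) • f (σ + y * I)) atTop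
        (𝓝 (∫ y : ℝ, cexp ((σ + y * I) * t) • f (σ + y * I))) :=
    intervalIntegral_tendsto_integral
      (integrable_cexp_smul_vertical t hσ hp
        (hf.continuousOn.comp_continuous (by fun_prop) fun y ↦ by simpa using hσ)
        fun y ↦ hb _ (by simpa using hσ))
      tendsto_neg_atTop_atBot tendsto_id
  have rectangle_eq_zero (T : ℝ) :
      (∫ x in c..d, cexp ((x + (-T : ℝ) * I) * t) • f (x + (-T : ℝ) * I)) -
        (∫ x in c..d, cexp ((x + T * I) * t) • f (x + T * I)) +
        I • (∫ y in (-T)..T, cexp ((d + y * I) * t) • f (d + y * I)) -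
        I • (∫ y in (-T)..T, cexp ((c + y * I) * t) • f (c + y * I)) = 0 := by
    refine integral_boundary_rect_eq_zero_of_differentiableOn (fun s ↦ cexp (s * t) • f s)
      ⟨c, -T⟩ ⟨d, T⟩ (.mono (.smul (by fun_prop) hf) fun s hs ↦ ?_)
    have hs_re : s.re ∈ Set.uIcc c d := hs.1
    rw [Set.uIcc_of_le hcd] at hs_re
    exact hc.trans_le hs_re.1
  have limit_eq := (((tendsto_horizontal_integral_zero abs_neg (by linarith) ht hc hcd hb).sub
    (tendsto_horizontal_integral_zero (fun _ ↦ rfl) (by linarith) ht hc hcd hb)).add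
    ((vertical_tendsto (hc.trans_le hcd)).const_smul I)).sub ((vertical_tendsto hc).const_smul I)
  simp_rw [rectangle_eq_zero] at limit_eq
  have smul_sub_eq_zero := tendsto_nhds_unique limit_eq tendsto_const_nhds
  rw [sub_zero, zero_add, ← smul_sub, smul_eq_zero_iff_right I_ne_zero, sub_eq_zero]
    at smul_sub_eq_zero
  rw [inverseLaplace, inverseLaplace, smul_sub_eq_zero]

end InverseLaplace

section Laplace

open Complex MeasureTheory FourierTransform

variable {E : Type*} [NormedAddCommGroup E] [NormedSpace ℂ E] {c t z : ℝ}

/-- The two-sided Laplace transform `∫ exp (-s x) g(x) dx` over the whole real line; one-sided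
transforms are obtained from functions vanishing on `(-∞, 0]`. -/
noncomputable def bilateralLaplace (g : ℝ → E) (s : ℂ) : E :=
  ∫ x : ℝ, cexp (-(s * x)) • g x

theorem fourier_cexp_smul_eq_bilateralLaplace (g : ℝ → E) (c w : ℝ) :
    𝓕 (fun x : ℝ ↦ cexp (-(c * x)) • g x) w =
      bilateralLaplace g (c + ((2 * Real.pi * w : ℝ) : ℂ) * I) := by
  rw [Real.fourier_real_eq_integral_exp_smul, bilateralLaplace]
  refine integral_congr_ae (.of_forall fun x ↦ ?_)
  dsimp only
  rw [← smul_assoc, smul_eq_mul, ← Complex.exp_add]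
  push_cast
  ring_nf

theorem inverseLaplace_bilateralLaplace [CompleteSpace E] {g : ℝ → E}
    (hg : Integrable fun x : ℝ ↦ cexp (-(c * x)) • g x)
    (hL : Integrable fun y : ℝ ↦ bilateralLaplace g (c + y * I)) (hgt : ContinuousAt g t) :
    inverseLaplace (bilateralLaplace g) c t = g t := by
  set f : ℝ → E := fun x ↦ cexp (-(c * x)) • g x
  have fourier_eq : 𝓕 f = fun w ↦ bilateralLaplace g (c + ((2 * Real.pi * w : ℝ) : ℂ) * I) :=
    funext (fourier_cexp_smul_eq_bilateralLaplace g c)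
  have inversion : 𝓕⁻ (𝓕 f) t = f t := by
    refine hg.fourierInv_fourier_eq ?_ (ContinuousAt.smul (by fun_prop) hgt)
    rw [fourier_eq]
    exact hL.comp_mul_left' (R := 2 * Real.pi) (by positivity)
  have change_of_variables := Measure.integral_comp_mul_left
    (fun y : ℝ ↦ cexp ((c + y * I) * t) • bilateralLaplace g (c + y * I)) (2 * Real.pi)
  rw [abs_of_pos (by positivity)] at change_of_variables
  calc inverseLaplace (bilateralLaplace g) c t
      = ∫ w : ℝ, cexp ((c + ((2 * Real.pi * w : ℝ) : ℂ) * I) * t) •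
          bilateralLaplace g (c + ((2 * Real.pi * w : ℝ) : ℂ) * I) := change_of_variables.symm
    _ = cexp (c * t) • 𝓕⁻ (𝓕 f) t := by
      rw [Real.fourierInv_eq', fourier_eq, ← integral_smul]
      refine integral_congr_ae (.of_forall fun w ↦ ?_)
      dsimp only
      rw [← smul_assoc, smul_eq_mul, ← Complex.exp_add]
      congr 2
      simp
      ring
    _ = g t := by
      rw [inversion, ← smul_assoc, smul_eq_mul, ← Complex.exp_add, add_neg_cancel, Complex.exp_zero,
        one_smul]

/-- The one-sided power `x ^ (z - 1) / Γ(z)` on `(0, ∞)`, normalised so that its Laplace transform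
is `s ^ (-z)`. -/
noncomputable def powerKernel (z x : ℝ) : ℝ :=
  (Set.Ioi 0).indicator (fun x ↦ x ^ (z - 1) / Real.Gamma z) x

theorem powerKernel_nonneg (hz : 0 < z) (x : ℝ) : 0 ≤ powerKernel z x :=
  Set.indicator_nonneg (fun _ hx ↦
    div_nonneg (Real.rpow_nonneg (le_of_lt hx) _) (Real.Gamma_pos_of_pos hz).le) x

theorem measurable_powerKernel (z : ℝ) : Measurable (powerKernel z) :=
  Measurable.indicator (by fun_prop) measurableSet_Ioi

theorem integrable_exp_mul_powerKernel (hz : 0 < z) (hc : 0 < c) :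
    Integrable fun x : ℝ ↦ powerKernel z x * Real.exp (-(c * x)) := by
  have h := integrableOn_rpow_mul_exp_neg_mul_rpow (s := z - 1) (by linarith) one_pos hc
  refine ((integrable_indicator_iff measurableSet_Ioi).2 (h.div_const (Real.Gamma z))).congr
    (.of_forall fun x ↦ ?_)
  by_cases hx : x ∈ Set.Ioi (0 : ℝ) <;> simp [powerKernel, hx, div_mul_eq_mul_div]

theorem integral_exp_mul_powerKernel (hz : 0 < z) (hc : 0 < c) :
    ∫ x : ℝ, powerKernel z x * Real.exp (-(c * x)) = c ^ (-z) := by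
  have h := Real.integral_rpow_mul_exp_neg_mul_Ioi hz hc
  have integrand_eq : (fun x ↦ powerKernel z x * Real.exp (-(c * x))) =
      (Set.Ioi 0).indicator fun x ↦ (Real.Gamma z)⁻¹ * (x ^ (z - 1) * Real.exp (-(c * x))) := by
    ext x
    by_cases hx : x ∈ Set.Ioi (0 : ℝ) <;> simp [powerKernel, hx]
    ring
  rw [integrand_eq, integral_indicator measurableSet_Ioi, integral_const_mul, h, one_div,
    Real.inv_rpow hc.le, Real.rpow_neg hc.le]
  field_simp [(Real.Gamma_pos_of_pos hz).ne']

theorem analyticOnNhd_bilateralLaplace {g : ℝ → ℝ} (hg : Measurable g) (hg_nonneg : ∀ x, 0 ≤ g x)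
    (hint : ∀ c : ℝ, 0 < c → Integrable fun x : ℝ ↦ g x * Real.exp (-(c * x))) :
    AnalyticOnNhd ℂ (bilateralLaplace fun x ↦ (g x : ℂ)) {s | 0 < s.re} := by
  set μ : Measure ℝ := volume.withDensity fun x ↦ ENNReal.ofReal (g x)
  have laplace_eq_mgf :
      (bilateralLaplace fun x ↦ (g x : ℂ)) = ProbabilityTheory.complexMGF (fun x ↦ -x) μ := by
    ext s
    rw [ProbabilityTheory.complexMGF, integral_withDensity_eq_integral_toReal_smul
      hg.ennreal_ofReal (.of_forall fun _ ↦ ENNReal.ofReal_lt_top), bilateralLaplace]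
    simp [ENNReal.toReal_ofReal, hg_nonneg, mul_comm]
  have pos_subset : Set.Ioi 0 ⊆ ProbabilityTheory.integrableExpSet (fun x ↦ -x) μ := by
    intro c hc
    refine (integrable_withDensity_iff_integrable_smul' hg.ennreal_ofReal
      (.of_forall fun _ ↦ ENNReal.ofReal_lt_top)).2 ?_
    simpa [ENNReal.toReal_ofReal, hg_nonneg] using hint c hc
  rw [laplace_eq_mgf]
  exact ProbabilityTheory.analyticOnNhd_complexMGF.mono fun s hs ↦
    interior_maximal pos_subset isOpen_Ioi hs

theorem eqOn_re_pos_of_eq_ofReal {f g : ℂ → E} (hf : AnalyticOnNhd ℂ f {s | 0 < s.re})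
    (hg : AnalyticOnNhd ℂ g {s | 0 < s.re}) (hfg : ∀ x : ℝ, 0 < x → f x = g x) :
    Set.EqOn f g {s | 0 < s.re} := by
  refine hf.eqOn_of_preconnected_of_frequently_eq hg (convex_halfSpace_re_gt 0).isPreconnected
    (z₀ := 1) (by simp) ?_
  have ofReal_tendsto : Tendsto ((↑) : ℝ → ℂ) (𝓝[≠] 1) (𝓝[≠] 1) := by
    simpa using continuous_ofReal.continuousWithinAt.tendsto_nhdsWithin
      (s := {(1 : ℝ)}ᶜ) (t := {(1 : ℂ)}ᶜ) (x := 1) fun x hx ↦ by simpa using hx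
  refine ofReal_tendsto.frequently (Eventually.frequently ?_)
  filter_upwards [nhdsWithin_le_nhds (lt_mem_nhds one_pos)] with x hx using hfg x hx

theorem bilateralLaplace_powerKernel (hz : 0 < z) {s : ℂ} (hs : 0 < s.re) :
    bilateralLaplace (fun x ↦ (powerKernel z x : ℂ)) s = s ^ (-z : ℂ) := by
  have cpow_analytic : AnalyticOnNhd ℂ (fun s : ℂ ↦ s ^ (-z : ℂ)) {s | 0 < s.re} :=
    fun s hs ↦ analyticAt_id.cpow analyticAt_const (.inl hs)
  refine eqOn_re_pos_of_eq_ofReal (analyticOnNhd_bilateralLaplace (measurable_powerKernel z)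
    (powerKernel_nonneg hz) fun c ↦ integrable_exp_mul_powerKernel hz) cpow_analytic
    (fun x hx ↦ ?_) hs
  rw [bilateralLaplace, ← ofReal_neg, ← ofReal_cpow hx.le, ← integral_exp_mul_powerKernel hz hx,
    ← integral_complex_ofReal]
  simp [mul_comm]

theorem continuousAt_powerKernel (z : ℝ) (ht : 0 < t) : ContinuousAt (powerKernel z) t := by
  have eventually_eq : powerKernel z =ᶠ[𝓝 t] fun x ↦ x ^ (z - 1) / Real.Gamma z := by
    filter_upwards [lt_mem_nhds ht] with x hx using Set.indicator_of_mem hx _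
  exact ((Real.continuousAt_rpow_const t (z - 1) (.inl ht.ne')).div_const _).congr
    eventually_eq.symm

theorem inverseLaplace_cpow_neg (hc : 0 < c) (hz : 1 < z) (ht : 0 < t) :
    inverseLaplace (fun s ↦ s ^ (-z : ℂ)) c t = ((t ^ (z - 1) / Real.Gamma z : ℝ) : ℂ) := by
  have line_eq (y : ℝ) : bilateralLaplace (fun x ↦ (powerKernel z x : ℂ)) (c + y * I) =
      (c + y * I) ^ (-z : ℂ) :=
    bilateralLaplace_powerKernel (by linarith) (by simpa using hc)
  have kernel_integrable : Integrable fun x : ℝ ↦ cexp (-(c * x)) • (powerKernel z x : ℂ) :=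
    (integrable_exp_mul_powerKernel (z := z) (by linarith) hc).ofReal.congr
      (.of_forall fun x ↦ by simp [mul_comm])
  have line_integrable : Integrable fun y : ℝ ↦ (c + y * I : ℂ) ^ (-z : ℂ) := by
    refine (integrable_norm_vertical_rpow_neg hc hz).mono'
      (continuous_vertical_cpow hc _).aestronglyMeasurable (.of_forall fun y ↦ ?_)
    rw [← ofReal_neg, norm_cpow_real]
  have inversion := inverseLaplace_bilateralLaplace kernel_integrable
    (by simpa only [line_eq] using line_integrable)
    (continuous_ofReal.continuousAt.comp (continuousAt_powerKernel z ht))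
  simp_rw [inverseLaplace, line_eq] at inversion
  rw [inverseLaplace, inversion, powerKernel, Set.indicator_of_mem (Set.mem_Ioi.2 ht)]

end Laplace

section Sector

open Complex

theorem setOf_abs_arg_le_eq {θ : ℝ} (h0 : 0 ≤ θ) (hpi : θ ≤ Real.pi) :
    {z : ℂ | |arg z| ≤ θ} = {z : ℂ | ‖z‖ * Real.cos θ ≤ z.re} := by
  ext z
  rcases eq_or_ne z 0 with rfl | hz
  · simp [h0]
  · have cos_le_cos_iff : Real.cos θ ≤ Real.cos |arg z| ↔ |arg z| ≤ θ :=
      Real.strictAntiOn_cos.le_iff_ge ⟨h0, hpi⟩ ⟨abs_nonneg _, abs_arg_le_pi z⟩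
    rw [Set.mem_ofPred_eq, Set.mem_ofPred_eq, ← cos_le_cos_iff, Real.cos_abs,
      ← mul_le_mul_iff_right₀ (norm_pos_iff.2 hz), norm_mul_cos_arg]

theorem isClosed_abs_arg_le {θ : ℝ} (h0 : 0 ≤ θ) (hpi : θ ≤ Real.pi) :
    IsClosed {z : ℂ | |arg z| ≤ θ} := by
  rw [setOf_abs_arg_le_eq h0 hpi]
  exact isClosed_le (by fun_prop) (by fun_prop)

theorem abs_arg_cpow_ofReal_le {α : ℝ} (h0 : 0 ≤ α) (h2 : α ≤ 2) {s : ℂ} (hs : 0 < s.re) :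
    |arg (s ^ (α : ℂ))| ≤ α * Real.pi / 2 := by
  have arg_lt : |arg s| < Real.pi / 2 := abs_arg_lt_pi_div_two_iff.2 (.inl hs)
  have abs_mul_eq : |α * arg s| = α * |arg s| := by rw [abs_mul, abs_of_nonneg h0]
  have abs_mul_lt_pi : |α * arg s| < Real.pi := by
    rw [abs_mul_eq]
    nlinarith [abs_nonneg (arg s)]
  have arg_eq : arg (s ^ (α : ℂ)) = α * arg s := by
    have log_mul_im : (log s * α).im = α * arg s := by simp [log_im, mul_comm]
    rw [cpow_def_of_ne_zero (ne_zero_of_re_pos hs), ← log_im, log_exp, log_mul_im] <;>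
      rw [log_mul_im]
    exacts [(abs_lt.1 abs_mul_lt_pi).1, (abs_lt.1 abs_mul_lt_pi).2.le]
  rw [arg_eq, abs_mul_eq]
  nlinarith

end Sector

section Resolvent

variable {𝕜 A : Type*} [NontriviallyNormedField 𝕜] [NormedRing A] [NormedAlgebra 𝕜 A] {a : A}

theorem smul_resolvent_eq_one_add {x : 𝕜} (hx : x ∈ resolventSet 𝕜 a) :
    x • resolvent a x = 1 + a * resolvent a x := by
  have h : (algebraMap 𝕜 A x - a) * resolvent a x = 1 := Ring.mul_inverse_cancel _ hx
  rwa [sub_mul, sub_eq_iff_eq_add, ← Algebra.smul_def] at h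

variable [CompleteSpace A]

theorem exists_norm_resolvent_le_of_isClosed [ProperSpace 𝕜] {S : Set 𝕜} (hS : IsClosed S)
    (hSa : S ⊆ resolventSet 𝕜 a) : ∃ K, ∀ x ∈ S, ‖resolvent a x‖ ≤ K := by
  have eventually_le : ∀ᶠ x in Bornology.cobounded 𝕜, ‖resolvent a x‖ ≤ 1 :=
    (spectrum.resolvent_tendsto_cobounded a).norm.eventually (ge_mem_nhds (by simp))
  obtain ⟨ρ, -, le_one⟩ := hasBasis_cobounded_norm.eventually_iff.1 eventually_le
  have resolvent_continuousOn : ContinuousOn (resolvent a) S := fun x hx ↦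
    (spectrum.hasDerivAt_resolvent_const_left (hSa hx)).continuousAt.continuousWithinAt
  obtain ⟨K, le_K⟩ := ((isCompact_closedBall (0 : 𝕜) ρ).inter_left hS).exists_bound_of_continuousOn
    (resolvent_continuousOn.mono Set.inter_subset_left)
  refine ⟨max K 1, fun x hx ↦ ?_⟩
  rcases le_total ‖x‖ ρ with h | h
  · exact (le_K x ⟨hx, by simpa using h⟩).trans (le_max_left _ _)
  · exact (le_one h).trans (le_max_right _ _)

theorem hasSum_resolvent_pow {x : 𝕜} (hx : ‖a‖ < ‖x‖) (n : ℕ) :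
    HasSum (fun k : ℕ ↦ ((k + n).choose n * x⁻¹ ^ (k + (n + 1)) : 𝕜) • a ^ k)
      (resolvent a x ^ (n + 1)) := by
  have x_ne_zero : x ≠ 0 := norm_pos_iff.1 ((norm_nonneg a).trans_lt hx)
  have norm_lt_one : ‖x⁻¹ • a‖ < 1 := by
    rwa [norm_smul, norm_inv, inv_mul_lt_one₀ (norm_pos_iff.2 x_ne_zero)]
  have resolvent_eq : resolvent a x = x⁻¹ • Ring.inverse (1 - x⁻¹ • a) := by
    have h : x • resolvent a x = resolvent (x⁻¹ • a) (1 : 𝕜) :=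
      spectrum.units_smul_resolvent_self (r := Units.mk0 x x_ne_zero)
    rw [eq_inv_smul_iff₀ x_ne_zero, h, resolvent, map_one]
  rw [resolvent_eq, smul_pow]
  refine ((hasSum_choose_mul_geometric_of_norm_lt_one' n norm_lt_one).const_smul
    (x⁻¹ ^ (n + 1))).congr_fun fun k ↦ ?_
  rw [← map_natCast (algebraMap 𝕜 A), ← Algebra.smul_def, smul_pow, smul_smul, smul_smul, pow_add]
  ring_nf

end Resolvent

section ResolventCpow

open Complex

variable {B : Type*} [NormedRing B] [NormedAlgebra ℂ B] {α : ℝ} {a : B} {s : ℂ}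

/-- The second derivative of `s ↦ (s ^ α - a)⁻¹`, in closed form. It is the Laplace transform of
`t ↦ t ^ (α + 1) • E_{α,α}(t ^ α • a)`. -/
noncomputable def resolventCpowSecondDeriv (α : ℝ) (a : B) (s : ℂ) : B :=
  s ^ (α - 2 : ℂ) • ((2 * α ^ 2 : ℂ) • (s ^ (α : ℂ) • resolvent a (s ^ (α : ℂ)) ^ 3) +
    (α * (1 - α) : ℂ) • resolvent a (s ^ (α : ℂ)) ^ 2)

theorem sector_subset_resolventSet {θ : ℝ} (hspec : ∀ μ ∈ spectrum ℂ a, θ < |arg μ|) :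
    {z : ℂ | |arg z| ≤ θ} ⊆ resolventSet ℂ a := fun z hz ↦
  Set.notMem_compl_iff.1 fun h ↦ (hspec z h).not_ge hz

variable [CompleteSpace B]

theorem differentiableOn_resolventCpowSecondDeriv (h0 : 0 ≤ α) (h2 : α ≤ 2)
    (hspec : ∀ μ ∈ spectrum ℂ a, α * Real.pi / 2 < |arg μ|) :
    DifferentiableOn ℂ (resolventCpowSecondDeriv α a) {s | 0 < s.re} := by
  intro s hs
  have cpow_differentiable (p : ℂ) : DifferentiableAt ℂ (fun s : ℂ ↦ s ^ p) s :=
    differentiableAt_id.cpow_const (.inl hs)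
  have resolvent_differentiable : DifferentiableAt ℂ (fun s : ℂ ↦ resolvent a (s ^ (α : ℂ))) s :=
    (spectrum.hasDerivAt_resolvent_const_left (sector_subset_resolventSet hspec
      (abs_arg_cpow_ofReal_le h0 h2 hs))).differentiableAt.fun_comp' s (cpow_differentiable α)
  exact ((cpow_differentiable _).fun_smul ((((cpow_differentiable α).fun_smul
    (resolvent_differentiable.fun_pow 3)).fun_const_smul _).fun_add
    ((resolvent_differentiable.fun_pow 2).fun_const_smul _))).differentiableWithinAt

theorem exists_norm_resolventCpowSecondDeriv_le (h0 : 0 ≤ α) (h2 : α ≤ 2)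
    (hspec : ∀ μ ∈ spectrum ℂ a, α * Real.pi / 2 < |arg μ|) :
    ∃ C, ∀ s : ℂ, 0 < s.re → ‖resolventCpowSecondDeriv α a s‖ ≤ C * ‖s‖ ^ (-(2 - α)) := by
  have sector_subset := sector_subset_resolventSet hspec
  obtain ⟨K, hK⟩ := exists_norm_resolvent_le_of_isClosed
    (isClosed_abs_arg_le (by positivity) (by nlinarith [Real.pi_pos])) sector_subset
  refine ⟨‖(2 * α ^ 2 : ℂ)‖ * ((‖(1 : B)‖ + ‖a‖ * K) * K ^ 2) + ‖(α * (1 - α) : ℂ)‖ * K ^ 2,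
    fun s hs ↦ ?_⟩
  have s_mem := abs_arg_cpow_ofReal_le h0 h2 hs
  rw [resolventCpowSecondDeriv]
  set R := resolvent a (s ^ (α : ℂ))
  have R_le : ‖R‖ ≤ K := hK _ s_mem
  have K_nonneg : 0 ≤ K := (norm_nonneg _).trans R_le
  have R_sq_le : ‖R ^ 2‖ ≤ K ^ 2 := (norm_pow_le' R two_pos).trans (by gcongr)
  have smul_R_le : ‖s ^ (α : ℂ) • R‖ ≤ ‖(1 : B)‖ + ‖a‖ * K := by
    rw [smul_resolvent_eq_one_add (sector_subset s_mem)]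
    exact (norm_add_le _ _).trans (by grw [norm_mul_le, R_le])
  have smul_R_cube_le : ‖s ^ (α : ℂ) • R ^ 3‖ ≤ (‖(1 : B)‖ + ‖a‖ * K) * K ^ 2 := by
    rw [pow_succ', ← smul_mul_assoc]
    exact (norm_mul_le _ _).trans (by gcongr)
  have norm_cpow_eq : ‖s ^ (α - 2 : ℂ)‖ = ‖s‖ ^ (-(2 - α)) := by
    rw [neg_sub, ← norm_cpow_real]
    simp
  rw [norm_smul, norm_cpow_eq, mul_comm]
  gcongr
  refine (norm_add_le _ _).trans ?_
  rw [norm_smul (2 * α ^ 2 : ℂ), norm_smul (α * (1 - α) : ℂ)]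
  gcongr

theorem hasSum_resolventCpowSecondDeriv (hs : s ≠ 0) (ha : ‖a‖ < ‖s‖ ^ α) :
    HasSum (fun k : ℕ ↦ s ^ (-(α * k + α + 2 : ℝ) : ℂ) •
      ((α * k + α) * (α * k + α + 1) : ℝ) • a ^ k) (resolventCpowSecondDeriv α a s) := by
  rw [← norm_cpow_real] at ha
  refine ((((hasSum_resolvent_pow ha 2).const_smul (s ^ (α : ℂ))).const_smul (2 * α ^ 2 : ℂ)).add
    ((hasSum_resolvent_pow ha 1).const_smul (α * (1 - α) : ℂ))).const_smul (s ^ (α - 2 : ℂ))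
    |>.congr_fun fun k ↦ ?_
  have mul_inv_pow_succ :
      s ^ (α : ℂ) * (s ^ (α : ℂ))⁻¹ ^ (k + (2 + 1)) = (s ^ (α : ℂ))⁻¹ ^ (k + 2) := by
    rw [← add_assoc, pow_succ', mul_inv_cancel_left₀ (by simp [cpow_eq_zero_iff, hs])]
  have cpow_eq : s ^ (-(α * k + α + 2 : ℝ) : ℂ) =
      s ^ (α - 2 : ℂ) * (s ^ (α : ℂ))⁻¹ ^ (k + 2) := by
    rw [← cpow_neg, ← cpow_mul_nat, ← cpow_add _ _ hs]
    push_cast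
    ring_nf
  simp_rw [← coe_smul, smul_smul, ← add_smul, smul_smul, cpow_eq, Nat.choose_one_right,
    Nat.cast_choose_two]
  congr 1
  push_cast
  linear_combination -(s ^ (α - 2 : ℂ) * α ^ 2 * (k + 2) * (k + 1)) * mul_inv_pow_succ

end ResolventCpow

section MittagLeffler

open Complex

/-- The two-parameter Mittag-Leffler function `E_{α,β}(b) = ∑ bᵏ / Γ(αk + β)` on a topological real
algebra; for real matrices it is `ML`. -/
noncomputable def mittagLeffler {R : Type*} [Ring R] [Module ℝ R] [TopologicalSpace R]
    (α β : ℝ) (b : R) : R :=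
  ∑' k : ℕ, (Real.Gamma (α * k + β))⁻¹ • b ^ k

theorem map_mittagLeffler {R B : Type*} [NormedRing R] [NormedAlgebra ℝ R] [CompleteSpace R]
    [NormedRing B] [NormedAlgebra ℝ B] (φ : R →+* B) (hφ : Isometry φ) (α β : ℝ) (b : R) :
    φ (mittagLeffler α β b) = mittagLeffler α β (φ b) := by
  rw [mittagLeffler, hφ.isClosedEmbedding.map_tsum]
  simp_rw [map_real_smul φ hφ.continuous, map_pow]
  rfl

theorem summable_natCast_pow_mul_norm_pow {R : Type*} [NormedRing R] [NormedAlgebra ℝ R]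
    (m : ℕ) {r : R} (hr : ‖r‖ < 1) : Summable fun k : ℕ ↦ (k : ℝ) ^ m * ‖r ^ k‖ := by
  refine (summable_norm_pow_mul_geometric_of_norm_lt_one m hr).congr fun k ↦ ?_
  rw [← Nat.cast_pow, ← map_natCast (algebraMap ℝ R), ← Algebra.smul_def, norm_smul,
    Real.norm_natCast, Nat.cast_pow]

theorem summable_quadratic_mul_norm_pow {R : Type*} [NormedRing R] [NormedAlgebra ℝ R]
    (α : ℝ) {r : R} (hr : ‖r‖ < 1) :
    Summable fun k : ℕ ↦ (α * k + α) * (α * k + α + 1) * ‖r ^ k‖ := by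
  refine ((((summable_natCast_pow_mul_norm_pow 2 hr).mul_left (α ^ 2)).add
    ((summable_natCast_pow_mul_norm_pow 1 hr).mul_left (2 * α ^ 2 + α))).add
    ((summable_natCast_pow_mul_norm_pow 0 hr).mul_left (α ^ 2 + α))).congr fun k ↦ ?_
  ring

theorem gamma_add_two {z : ℝ} (hz : 0 < z) :
    Real.Gamma (z + 2) = z * (z + 1) * Real.Gamma z := by
  rw [← one_add_one_eq_two, ← add_assoc, Real.Gamma_add_one (by positivity),
    Real.Gamma_add_one hz.ne']
  ring

variable {B : Type*} [NormedRing B] [NormedAlgebra ℂ B] {α c t : ℝ} {a : B}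

theorem norm_cpow_smul_pow_le (hα : 0 < α) (hc : 0 < c) {s : ℂ} (hs : c ≤ ‖s‖) (a : B) (k : ℕ) :
    ‖s ^ (-(α * k + α + 2 : ℝ) : ℂ) • ((α * k + α) * (α * k + α + 1) : ℝ) • a ^ k‖ ≤
      (α * k + α) * (α * k + α + 1) * ‖((c ^ α)⁻¹ • a) ^ k‖ * ‖s‖ ^ (-(α + 2)) := by
  have s_pos : 0 < ‖s‖ := hc.trans_le hs
  have rpow_le : ‖s‖ ^ (-(α * k + α + 2)) ≤ ((c ^ α)⁻¹) ^ k * ‖s‖ ^ (-(α + 2)) := by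
    rw [show -(α * k + α + 2) = -α * k + -(α + 2) by ring, Real.rpow_add s_pos,
      Real.rpow_mul_natCast s_pos.le, Real.rpow_neg s_pos.le]
    gcongr
  rw [norm_smul, norm_smul, Real.norm_of_nonneg (by positivity), ← ofReal_neg, norm_cpow_real,
    smul_pow, norm_smul, Real.norm_of_nonneg (by positivity)]
  grw [rpow_le]
  exact le_of_eq (by ring)

variable [CompleteSpace B]

theorem inverseLaplace_cpow_neg_smul_pow (hα : 0 < α) (hc : 0 < c) (ht : 0 < t) (a : B) (k : ℕ) :
    inverseLaplace (fun s ↦ s ^ (-(α * k + α + 2 : ℝ) : ℂ) •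
        ((α * k + α) * (α * k + α + 1) : ℝ) • a ^ k) c t =
      t ^ (α + 1) • (Real.Gamma (α * k + α))⁻¹ • (t ^ α • a) ^ k := by
  have z_pos : 0 < α * k + α := by positivity
  rw [inverseLaplace_smul_const, inverseLaplace_cpow_neg hc (by linarith) ht, gamma_add_two z_pos,
    coe_smul, smul_pow, smul_smul, smul_smul, smul_smul,
    show α * k + α + 2 - 1 = α + 1 + α * k by ring, Real.rpow_add ht, Real.rpow_mul_natCast ht.le]
  have := (Real.Gamma_pos_of_pos z_pos).ne'
  congr 1
  field_simp

theorem rpow_smul_mittagLeffler_eq_inverseLaplace (hα : 0 < α) (hc : 0 < c) (ha : ‖a‖ < c ^ α)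
    (ht : 0 < t) : t ^ (α + 1) • mittagLeffler α α (t ^ α • a) =
      inverseLaplace (resolventCpowSecondDeriv α a) c t := by
  have norm_lt_one : ‖(c ^ α)⁻¹ • a‖ < 1 := by
    have c_rpow_pos : 0 < c ^ α := Real.rpow_pos_of_pos hc α
    rwa [norm_smul, norm_inv, Real.norm_of_nonneg c_rpow_pos.le, inv_mul_lt_one₀ c_rpow_pos]
  have series := hasSum_inverseLaplace (p := α + 2)
    (F := fun k s ↦ s ^ (-(α * k + α + 2 : ℝ) : ℂ) • ((α * k + α) * (α * k + α + 1) : ℝ) • a ^ k)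
    t hc (by linarith)
    (fun k ↦ (continuous_vertical_cpow hc _).smul continuous_const)
    (fun k y ↦ norm_cpow_smul_pow_le hα hc (le_norm_vertical c y) a k)
    (summable_quadratic_mul_norm_pow α norm_lt_one)
    (fun y ↦ hasSum_resolventCpowSecondDeriv (ne_zero_of_re_pos (by simpa using hc))
      (ha.trans_le (Real.rpow_le_rpow hc.le (le_norm_vertical c y) hα.le)))
  simp_rw [inverseLaplace_cpow_neg_smul_pow hα hc ht] at series
  rw [← series.tsum_eq, tsum_const_smul'', mittagLeffler]

theorem exists_norm_mittagLeffler_le (hα0 : 0 < α) (hα1 : α < 1)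
    (hspec : ∀ μ ∈ spectrum ℂ a, α * Real.pi / 2 < |arg μ|) :
    ∃ M > (0 : ℝ), ∀ t > (0 : ℝ),
      t ^ (α - 1) * ‖mittagLeffler α α (t ^ α • a)‖ ≤ M / t ^ (α + 1) := by
  obtain ⟨C, hC⟩ := exists_norm_resolventCpowSecondDeriv_le hα0.le (by linarith) hspec
  have transform_differentiable :=
    differentiableOn_resolventCpowSecondDeriv hα0.le (by linarith) hspec
  set M := (2 * Real.pi)⁻¹ * (Real.exp 1 * C * ∫ x : ℝ, (1 + ‖x‖ ^ 2) ^ (-(2 - α) / 2))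
  refine ⟨max M 1, by positivity, fun t ht ↦ ?_⟩
  obtain ⟨d, a_lt, inv_le⟩ := ((tendsto_rpow_atTop hα0).eventually_gt_atTop ‖a‖ |>.and
    (eventually_ge_atTop t⁻¹)).exists
  have scaled_norm_le : t ^ (α + 1) * ‖mittagLeffler α α (t ^ α • a)‖ ≤ M * t ^ (1 - α) := by
    have h := norm_inverseLaplace_inv_le ht (by linarith) hC
    rw [inverseLaplace_eq_of_le (by linarith) ht.le transform_differentiable hC (inv_pos.2 ht)
      inv_le, ← rpow_smul_mittagLeffler_eq_inverseLaplace hα0 ((inv_pos.2 ht).trans_le inv_le) a_lt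
      ht, norm_smul, Real.norm_of_nonneg (by positivity)] at h
    convert h using 3
    ring
  have rpow_mul_rpow_eq_one : t ^ (α - 1) * t ^ (1 - α) = 1 := by
    rw [← Real.rpow_add ht]
    simp
  rw [le_div_iff₀ (by positivity)]
  calc t ^ (α - 1) * ‖mittagLeffler α α (t ^ α • a)‖ * t ^ (α + 1)
      = t ^ (α - 1) * (t ^ (α + 1) * ‖mittagLeffler α α (t ^ α • a)‖) := by ring
    _ ≤ t ^ (α - 1) * (M * t ^ (1 - α)) := by gcongr
    _ = M := by rw [mul_left_comm, rpow_mul_rpow_eq_one, mul_one]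
    _ ≤ max M 1 := le_max_left _ _

end MittagLeffler

theorem isometry_mapMatrix {n R S : Type*} [Fintype n] [DecidableEq n] [NormedRing R]
    [NormedRing S] (φ : R →+* S) (hφ : Isometry φ) :
    Isometry (φ.mapMatrix : Matrix n n R →+* Matrix n n S) := by
  refine AddMonoidHomClass.isometry_of_norm _ fun A ↦ ?_
  have nnnorm_eq (x : R) : ‖φ x‖₊ = ‖x‖₊ := hφ.nnnorm_map_of_map_zero (map_zero φ) x
  rw [Matrix.linfty_opNorm_def, Matrix.linfty_opNorm_def]
  simp_rw [RingHom.mapMatrix_apply, Matrix.map_apply, nnnorm_eq]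

theorem stmt1_general {R B : Type*} [NormedRing R] [NormedAlgebra ℝ R] [CompleteSpace R]
    [NormedRing B] [NormedAlgebra ℂ B] [CompleteSpace B] {α : ℝ} (hα0 : 0 < α) (hα1 : α < 1)
    (φ : R →+* B) (hφ : Isometry φ) (a : R)
    (hspec : ∀ μ ∈ spectrum ℂ (φ a), α * Real.pi / 2 < |Complex.arg μ|) :
    ∃ M > (0 : ℝ), ∀ t > (0 : ℝ),
      t ^ (α - 1) * ‖mittagLeffler α α (t ^ α • a)‖ ≤ M / t ^ (α + 1) := by
  have norm_eq (t : ℝ) :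
      ‖mittagLeffler α α (t ^ α • a)‖ = ‖mittagLeffler α α (t ^ α • φ a)‖ := by
    rw [← map_real_smul φ hφ.continuous, ← map_mittagLeffler φ hφ,
      hφ.norm_map_of_map_zero (map_zero φ)]
  simpa only [norm_eq] using exists_norm_mittagLeffler_le hα0 hα1 hspec

theorem stmt1 (α : ℝ) (hα0 : 0 < α) (hα1 : α < 1) (s : ℕ)
    (A : Matrix (Fin s) (Fin s) ℝ)
    (hspec : ∀ μ ∈ spectrum ℂ (A.map (algebraMap ℝ ℂ)),
      μ ≠ 0 ∧ α * Real.pi / 2 < |Complex.arg μ|) :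
    ∃ t₀ > (0:ℝ), ∃ M > (0:ℝ), ∀ t ≥ t₀,
      t ^ (α - 1) * ‖ML α α (t ^ α • A)‖ ≤ M / t ^ (α + 1) := by
  let _ : NormedAlgebra ℝ (Matrix (Fin s) (Fin s) ℝ) := Matrix.linftyOpNormedAlgebra
  let _ : NormedAlgebra ℂ (Matrix (Fin s) (Fin s) ℂ) := Matrix.linftyOpNormedAlgebra
  have arg_gt : ∀ μ ∈ spectrum ℂ ((algebraMap ℝ ℂ).mapMatrix A),
      α * Real.pi / 2 < |Complex.arg μ| := fun μ hμ ↦ (hspec μ hμ).2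
  obtain ⟨M, M_pos, hM⟩ := stmt1_general hα0 hα1 _
    (isometry_mapMatrix _ (algebraMap_isometry ℝ ℂ)) A arg_gt
  exact ⟨1, one_pos, M, M_pos, fun t ht ↦ hM t (one_pos.trans_le ht)⟩
end

section
/- Let 0 < α < 1, let A be a real s×s matrix, and suppose there exist t₀ > 0 and M > 0 such that t^{α-1} ‖E_{α,α}(t^α A)‖ ≤ M / t^{α+1} for all t ≥ t₀. Then for every T > 2t₀ and every t > T one has t^{1-α} ∫₀^{t-t₀} (t-τ)^{α-1} ‖E_{α,α}((t-τ)^α A)‖ τ^{α-1} dτ ≤ M ( 2/(α T^α) + 2^{1-α}/(α t₀^α) ). -/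
open Filter Topology MeasureTheory

attribute [local instance] Matrix.linftyOpNormedAddCommGroup Matrix.linftyOpNormedRing

/-!
The kernel `k u = u ^ (α - 1) * ‖E_{α,α}(u ^ α A)‖` matters only through the bound
`k u ≤ M / u ^ (α + 1)` for `u ≥ t₀` and its measurability, so that
`∫₀^{t-t₀} k (t - τ) τ ^ (α - 1) dτ ≤ M ∫₀^{t-t₀} (t - τ) ^ (-(α + 1)) τ ^ (α - 1) dτ`.
Split the right-hand side at `τ = t / 2`, and on each half replace the factor that is not singular
there by its largest value: `(t / 2) ^ (-(α + 1))` on the left half, `(t / 2) ^ (α - 1)` on the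
right half. The remaining power functions integrate explicitly.
Measurability of the kernel comes from continuity of `E_{α,β}`, whose series converges locally
uniformly because `Γ x` dominates `R ^ x` for every `R`.
-/

section MittagLefflerContinuity

theorem rpow_sub_one_mul_exp_neg_le_Gamma {R x : ℝ} (hR : 0 < R) (hx : 1 ≤ x) :
    R ^ (x - 1) * Real.exp (-R) ≤ Real.Gamma x := by
  have gamma_integrable : IntegrableOn (fun u : ℝ ↦ Real.exp (-u) * u ^ (x - 1)) (Set.Ioi 0) :=
    Real.GammaIntegral_convergent (by linarith)
  have tail_subset : Set.Ioi R ⊆ Set.Ioi 0 := Set.Ioi_subset_Ioi hR.le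
  calc R ^ (x - 1) * Real.exp (-R)
      = ∫ u in Set.Ioi R, Real.exp (-u) * R ^ (x - 1) := by
        rw [integral_mul_const, integral_exp_neg_Ioi, mul_comm]
    _ ≤ ∫ u in Set.Ioi R, Real.exp (-u) * u ^ (x - 1) := by
        refine setIntegral_mono_on ((integrableOn_exp_neg_Ioi R).mul_const _)
          (gamma_integrable.mono_set tail_subset) measurableSet_Ioi fun u hu ↦ ?_
        gcongr
        exact le_of_lt hu
    _ ≤ ∫ u in Set.Ioi 0, Real.exp (-u) * u ^ (x - 1) := by
        refine setIntegral_mono_set gamma_integrable ?_ tail_subset.eventuallyLE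
        filter_upwards [ae_restrict_mem measurableSet_Ioi] with u hu
        exact mul_nonneg (Real.exp_nonneg _) (Real.rpow_nonneg (le_of_lt hu) _)
    _ = Real.Gamma x := (Real.Gamma_eq_integral (by linarith)).symm

theorem summable_abs_inv_Gamma_mul_pow {α : ℝ} (hα : 0 < α) (β : ℝ) {r : ℝ} (hr : 0 ≤ r) :
    Summable fun k : ℕ ↦ |(Real.Gamma (α * k + β))⁻¹| * r ^ k := by
  obtain ⟨R, hR, hRα⟩ : ∃ R : ℝ, 0 < R ∧ R ^ α = r + 1 :=
    ⟨(r + 1) ^ α⁻¹, by positivity, Real.rpow_inv_rpow (by positivity) hα.ne'⟩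
  have geometric : Summable fun k : ℕ ↦
      (R ^ (β - 1) * Real.exp (-R))⁻¹ * (r / (r + 1)) ^ k :=
    (summable_geometric_of_lt_one (by positivity)
      ((div_lt_one (by positivity)).2 (by linarith))).mul_left _
  have one_le_arg : ∀ᶠ k : ℕ in atTop, 1 ≤ α * k + β :=
    (tendsto_atTop_add_const_right _ β
      (tendsto_natCast_atTop_atTop.const_mul_atTop hα)).eventually_ge_atTop 1
  refine geometric.of_norm_bounded_eventually_nat ?_
  filter_upwards [one_le_arg] with k hk
  have Gamma_lower : (r + 1) ^ k * (R ^ (β - 1) * Real.exp (-R)) ≤ Real.Gamma (α * k + β) := by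
    have := rpow_sub_one_mul_exp_neg_le_Gamma hR hk
    rwa [add_sub_assoc, Real.rpow_add hR, Real.rpow_mul_natCast hR.le, hRα, mul_assoc] at this
  calc ‖|(Real.Gamma (α * k + β))⁻¹| * r ^ k‖ = (Real.Gamma (α * k + β))⁻¹ * r ^ k := by
        have := Real.Gamma_pos_of_pos (zero_lt_one.trans_le hk)
        rw [abs_of_pos (by positivity), Real.norm_of_nonneg (by positivity)]
    _ ≤ ((r + 1) ^ k * (R ^ (β - 1) * Real.exp (-R)))⁻¹ * r ^ k := by gcongr
    _ = (R ^ (β - 1) * Real.exp (-R))⁻¹ * (r / (r + 1)) ^ k := by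
        rw [mul_inv, div_pow]; ring

-- The summand `1` is needed for `0 × 0` matrices, where `‖1‖ = 0`.
theorem norm_pow_le_norm_one_add_one_mul {𝔸 : Type*} [SeminormedRing 𝔸] (B : 𝔸) (k : ℕ) :
    ‖B ^ k‖ ≤ (‖(1 : 𝔸)‖ + 1) * ‖B‖ ^ k := by
  rcases k.eq_zero_or_pos with rfl | hk
  · simp
  · exact (norm_pow_le' B hk).trans
      (le_mul_of_one_le_left (by positivity) (by linarith [norm_nonneg (1 : 𝔸)]))

theorem continuous_tsum_inv_Gamma_smul_pow {𝔸 : Type*} [NormedRing 𝔸] [NormedAlgebra ℝ 𝔸]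
    [CompleteSpace 𝔸] {α : ℝ} (hα : 0 < α) (β : ℝ) :
    Continuous fun B : 𝔸 ↦ ∑' k : ℕ, (Real.Gamma (α * k + β))⁻¹ • B ^ k := by
  refine continuous_iff_continuousAt.2 fun B₀ ↦ ?_
  have majorant_summable : Summable fun k : ℕ ↦
      (‖(1 : 𝔸)‖ + 1) * (|(Real.Gamma (α * k + β))⁻¹| * (‖B₀‖ + 1) ^ k) :=
    (summable_abs_inv_Gamma_mul_pow hα β (by positivity)).mul_left _
  have continuousOn_ball : ContinuousOn
      (fun B : 𝔸 ↦ ∑' k : ℕ, (Real.Gamma (α * k + β))⁻¹ • B ^ k)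
      (Metric.ball 0 (‖B₀‖ + 1)) := by
    refine continuousOn_tsum (fun k ↦ by fun_prop) majorant_summable fun k B hB ↦ ?_
    have hB_le : ‖B‖ ≤ ‖B₀‖ + 1 := (mem_ball_zero_iff.1 hB).le
    calc ‖(Real.Gamma (α * k + β))⁻¹ • B ^ k‖
        = |(Real.Gamma (α * k + β))⁻¹| * ‖B ^ k‖ := norm_smul _ _
      _ ≤ |(Real.Gamma (α * k + β))⁻¹| * ((‖(1 : 𝔸)‖ + 1) * (‖B₀‖ + 1) ^ k) := by
          gcongr
          exact (norm_pow_le_norm_one_add_one_mul B k).trans (by gcongr)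
      _ = (‖(1 : 𝔸)‖ + 1) * (|(Real.Gamma (α * k + β))⁻¹| * (‖B₀‖ + 1) ^ k) :=
          mul_left_comm _ _ _
  exact continuousOn_ball.continuousAt (Metric.isOpen_ball.mem_nhds (by simp))

theorem continuous_ML {s : ℕ} {α : ℝ} (hα : 0 < α) (β : ℝ) :
    Continuous (ML α β : Matrix (Fin s) (Fin s) ℝ → Matrix (Fin s) (Fin s) ℝ) := by
  let _ : NormedAlgebra ℝ (Matrix (Fin s) (Fin s) ℝ) := Matrix.linftyOpNormedAlgebra
  exact continuous_tsum_inv_Gamma_smul_pow hα β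

end MittagLefflerContinuity

section PowerConvolution

variable {α β r t c δ : ℝ}

theorem intervalIntegrable_sub_rpow_mul_rpow {p q a b : ℝ} (hq : -1 < q) (ha : a < t)
    (hb : b < t) :
    IntervalIntegrable (fun τ ↦ (t - τ) ^ p * τ ^ q) volume a b := by
  refine (intervalIntegral.intervalIntegrable_rpow' hq).continuousOn_mul
    (ContinuousOn.rpow_const (by fun_prop) fun τ hτ ↦ Or.inl (sub_pos.2 ?_).ne')
  exact hτ.2.trans_lt (max_lt ha hb)

theorem integral_zero_sub_rpow_mul_rpow_le (hα : 0 < α) (hr : r ≤ 0) (hc : 0 ≤ c) (hct : c < t) :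
    ∫ τ in (0 : ℝ)..c, (t - τ) ^ r * τ ^ (α - 1) ≤ (t - c) ^ r * (c ^ α / α) := by
  calc ∫ τ in (0 : ℝ)..c, (t - τ) ^ r * τ ^ (α - 1)
      ≤ ∫ τ in (0 : ℝ)..c, (t - c) ^ r * τ ^ (α - 1) := by
        refine intervalIntegral.integral_mono_on hc
          (intervalIntegrable_sub_rpow_mul_rpow (by linarith) (by linarith) hct)
          ((intervalIntegral.intervalIntegrable_rpow' (by linarith)).const_mul _) fun τ hτ ↦ ?_
        exact mul_le_mul_of_nonneg_right
          (Real.rpow_le_rpow_of_nonpos (by linarith) (by linarith [hτ.2]) hr)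
          (Real.rpow_nonneg hτ.1 _)
    _ = (t - c) ^ r * (c ^ α / α) := by
        rw [intervalIntegral.integral_const_mul, integral_rpow (Or.inl (by linarith)),
          sub_add_cancel, Real.zero_rpow hα.ne', sub_zero]

theorem integral_rpow_neg_add_one_le (hβ : 0 < β) (hδ : 0 < δ) (hδc : δ ≤ c) :
    ∫ u in δ..c, u ^ (-(β + 1)) ≤ δ ^ (-β) / β := by
  have zero_notMem : (0 : ℝ) ∉ Set.uIcc δ c := by
    rw [Set.uIcc_of_le hδc]
    exact fun h ↦ hδ.not_ge h.1
  have cβ_nonneg : 0 ≤ c ^ (-β) := Real.rpow_nonneg (hδ.le.trans hδc) _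
  calc ∫ u in δ..c, u ^ (-(β + 1)) = (δ ^ (-β) - c ^ (-β)) / β := by
        rw [integral_rpow (Or.inr ⟨by linarith, zero_notMem⟩),
          show -(β + 1) + 1 = -β by ring, div_neg, ← neg_div, neg_sub]
    _ ≤ δ ^ (-β) / β := by gcongr; linarith

theorem integral_sub_rpow_neg_mul_rpow_le (hβ : 0 < β) (hr : r ≤ 0) (hc : 0 < c) (hδ : 0 < δ)
    (hct : c ≤ t - δ) :
    ∫ τ in c..(t - δ), (t - τ) ^ (-(β + 1)) * τ ^ r ≤ (δ ^ (-β) / β) * c ^ r := by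
  have sub_pos_of_mem : ∀ τ ∈ Set.uIcc c (t - δ), 0 < t - τ := fun τ hτ ↦ by
    rw [Set.uIcc_of_le hct] at hτ
    linarith [hτ.2]
  have continuousOn_kernel :
      ContinuousOn (fun τ ↦ (t - τ) ^ (-(β + 1))) (Set.uIcc c (t - δ)) :=
    ContinuousOn.rpow_const (by fun_prop) fun τ hτ ↦ Or.inl (sub_pos_of_mem τ hτ).ne'
  have continuousOn_weight : ContinuousOn (fun τ : ℝ ↦ τ ^ r) (Set.uIcc c (t - δ)) := by
    rw [Set.uIcc_of_le hct]
    exact ContinuousOn.rpow_const (by fun_prop) fun τ hτ ↦ Or.inl (hc.trans_le hτ.1).ne'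
  calc ∫ τ in c..(t - δ), (t - τ) ^ (-(β + 1)) * τ ^ r
      ≤ ∫ τ in c..(t - δ), (t - τ) ^ (-(β + 1)) * c ^ r := by
        refine intervalIntegral.integral_mono_on hct
          (continuousOn_kernel.mul continuousOn_weight).intervalIntegrable
          (continuousOn_kernel.mul continuousOn_const).intervalIntegrable fun τ hτ ↦ ?_
        exact mul_le_mul_of_nonneg_left (Real.rpow_le_rpow_of_nonpos hc hτ.1 hr)
          (Real.rpow_nonneg (by linarith [hτ.2]) _)
    _ = (∫ u in δ..(t - c), u ^ (-(β + 1))) * c ^ r := by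
        rw [intervalIntegral.integral_mul_const,
          intervalIntegral.integral_comp_sub_left (fun u ↦ u ^ (-(β + 1))), sub_sub_cancel]
    _ ≤ (δ ^ (-β) / β) * c ^ r := by
        gcongr
        exact integral_rpow_neg_add_one_le hβ hδ (by linarith)

theorem integral_sub_rpow_neg_mul_rpow_sub_one_le (hα₀ : 0 < α) (hα₁ : α ≤ 1) (hβ : 0 < β)
    (hc : 0 < c) (hδ : 0 < δ) (hct : c ≤ t - δ) :
    ∫ τ in (0 : ℝ)..(t - δ), (t - τ) ^ (-(β + 1)) * τ ^ (α - 1) ≤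
      (t - c) ^ (-(β + 1)) * (c ^ α / α) + (δ ^ (-β) / β) * c ^ (α - 1) := by
  rw [← intervalIntegral.integral_add_adjacent_intervals (b := c)
    (intervalIntegrable_sub_rpow_mul_rpow (by linarith) (by linarith) (by linarith))
    (intervalIntegrable_sub_rpow_mul_rpow (by linarith) (by linarith) (by linarith))]
  exact add_le_add
    (integral_zero_sub_rpow_mul_rpow_le hα₀ (by linarith) hc.le (by linarith))
    (integral_sub_rpow_neg_mul_rpow_le hβ (by linarith) hc hδ hct)

theorem rpow_mul_integral_sub_rpow_neg_mul_rpow_le (hα₀ : 0 < α) (hα₁ : α ≤ 1) (hδ : 0 < δ)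
    (hδt : 2 * δ ≤ t) :
    t ^ (1 - α) * ∫ τ in (0 : ℝ)..(t - δ), (t - τ) ^ (-(α + 1)) * τ ^ (α - 1) ≤
      2 / (α * t ^ α) + 2 ^ (1 - α) / (α * δ ^ α) := by
  have ht : 0 < t := by linarith
  have left_power : (t / 2) ^ (-(α + 1)) * (t / 2) ^ α = 2 / t := by
    rw [← Real.rpow_add (by positivity), show -(α + 1) + α = -1 by ring, Real.rpow_neg_one,
      inv_div]
  have right_power : (t / 2) ^ (α - 1) = 2 ^ (1 - α) / t ^ (1 - α) := by
    rw [← neg_sub 1 α, Real.rpow_neg (by positivity), Real.div_rpow ht.le zero_le_two, inv_div]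
  have t_power : t ^ (1 - α) = t / t ^ α := by rw [Real.rpow_sub ht, Real.rpow_one]
  calc t ^ (1 - α) * ∫ τ in (0 : ℝ)..(t - δ), (t - τ) ^ (-(α + 1)) * τ ^ (α - 1)
      ≤ t ^ (1 - α) * ((t - t / 2) ^ (-(α + 1)) * ((t / 2) ^ α / α) +
          (δ ^ (-α) / α) * (t / 2) ^ (α - 1)) := by
        gcongr
        exact integral_sub_rpow_neg_mul_rpow_sub_one_le hα₀ hα₁ hα₀ (by positivity) hδ
          (by linarith)
    _ = t ^ (1 - α) * ((t / 2) ^ (-(α + 1)) * (t / 2) ^ α) / α +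
          t ^ (1 - α) * (t / 2) ^ (α - 1) * δ ^ (-α) / α := by
        rw [sub_half]; ring
    _ = 2 / (α * t ^ α) + 2 ^ (1 - α) / (α * δ ^ α) := by
        rw [left_power, right_power, mul_div_cancel₀ _ (by positivity), t_power,
          Real.rpow_neg hδ.le]
        field_simp

end PowerConvolution

section DecayingKernel

variable {α β δ M t : ℝ} {k : ℝ → ℝ}

theorem kernel_mul_rpow_le_of_decay (hδ : 0 < δ) (hk_le : ∀ u ≥ δ, k u ≤ M / u ^ (β + 1))
    {τ : ℝ} (hτ : τ ∈ Set.Icc 0 (t - δ)) :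
    k (t - τ) * τ ^ (α - 1) ≤ M * ((t - τ) ^ (-(β + 1)) * τ ^ (α - 1)) := by
  have hδτ : δ ≤ t - τ := by linarith [hτ.2]
  rw [← mul_assoc, Real.rpow_neg (hδ.le.trans hδτ), ← div_eq_mul_inv]
  exact mul_le_mul_of_nonneg_right (hk_le _ hδτ) (Real.rpow_nonneg hτ.1 _)

theorem intervalIntegrable_kernel_mul_rpow_of_decay (hα : 0 < α) (hδ : 0 < δ) (hδt : δ ≤ t)
    (hk : AEStronglyMeasurable k) (hk_nonneg : ∀ u ≥ δ, 0 ≤ k u)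
    (hk_le : ∀ u ≥ δ, k u ≤ M / u ^ (β + 1)) :
    IntervalIntegrable (fun τ ↦ k (t - τ) * τ ^ (α - 1)) volume 0 (t - δ) := by
  have majorant_integrable : IntervalIntegrable
      (fun τ ↦ M * ((t - τ) ^ (-(β + 1)) * τ ^ (α - 1))) volume 0 (t - δ) :=
    (intervalIntegrable_sub_rpow_mul_rpow (by linarith) (by linarith) (by linarith)).const_mul M
  have reflected_measurable : AEStronglyMeasurable fun τ ↦ k (t - τ) :=
    hk.comp_quasiMeasurePreserving
      (quasiMeasurePreserving_sub_left_of_right_invariant volume t)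
  have power_measurable : AEStronglyMeasurable fun τ : ℝ ↦ τ ^ (α - 1) :=
    Measurable.aestronglyMeasurable (by fun_prop)
  refine majorant_integrable.mono_fun' (reflected_measurable.mul power_measurable).restrict ?_
  filter_upwards [ae_restrict_mem measurableSet_uIoc] with τ hτ
  rw [Set.uIoc_of_le (sub_nonneg.2 hδt)] at hτ
  rw [Real.norm_of_nonneg (mul_nonneg (hk_nonneg _ (by linarith [hτ.2]))
    (Real.rpow_nonneg hτ.1.le _))]
  exact kernel_mul_rpow_le_of_decay hδ hk_le (Set.Ioc_subset_Icc_self hτ)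

theorem integral_kernel_mul_rpow_le_of_decay (hα : 0 < α) (hδ : 0 < δ) (hδt : δ ≤ t)
    (hk : AEStronglyMeasurable k) (hk_nonneg : ∀ u ≥ δ, 0 ≤ k u)
    (hk_le : ∀ u ≥ δ, k u ≤ M / u ^ (β + 1)) :
    ∫ τ in (0 : ℝ)..(t - δ), k (t - τ) * τ ^ (α - 1) ≤
      M * ∫ τ in (0 : ℝ)..(t - δ), (t - τ) ^ (-(β + 1)) * τ ^ (α - 1) := by
  rw [← intervalIntegral.integral_const_mul]
  exact intervalIntegral.integral_mono_on (sub_nonneg.2 hδt)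
    (intervalIntegrable_kernel_mul_rpow_of_decay hα hδ hδt hk hk_nonneg hk_le)
    ((intervalIntegrable_sub_rpow_mul_rpow (by linarith) (by linarith) (by linarith)).const_mul M)
    fun τ hτ ↦ kernel_mul_rpow_le_of_decay hδ hk_le hτ

end DecayingKernel

theorem stmt3_general {α t₀ M : ℝ} {k : ℝ → ℝ} (hα₀ : 0 < α) (hα₁ : α ≤ 1) (ht₀ : 0 < t₀)
    (hk : AEStronglyMeasurable k) (hk_nonneg : ∀ u ≥ t₀, 0 ≤ k u)
    (hk_le : ∀ u ≥ t₀, k u ≤ M / u ^ (α + 1)) {T t : ℝ} (hT : 2 * t₀ ≤ T) (ht : T ≤ t) :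
    t ^ (1 - α) * ∫ τ in (0 : ℝ)..(t - t₀), k (t - τ) * τ ^ (α - 1) ≤
      M * (2 / (α * T ^ α) + 2 ^ (1 - α) / (α * t₀ ^ α)) := by
  have hM : 0 ≤ M := by
    have quotient_nonneg := (hk_nonneg t₀ le_rfl).trans (hk_le t₀ le_rfl)
    rwa [le_div_iff₀ (by positivity), zero_mul] at quotient_nonneg
  have hT₀ : 0 < T := by linarith
  have ht_pos : 0 < t := hT₀.trans_le ht
  calc t ^ (1 - α) * ∫ τ in (0 : ℝ)..(t - t₀), k (t - τ) * τ ^ (α - 1)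
      ≤ t ^ (1 - α) *
          (M * ∫ τ in (0 : ℝ)..(t - t₀), (t - τ) ^ (-(α + 1)) * τ ^ (α - 1)) := by
        gcongr
        exact integral_kernel_mul_rpow_le_of_decay hα₀ ht₀ (by linarith) hk hk_nonneg hk_le
    _ = M * (t ^ (1 - α) *
          ∫ τ in (0 : ℝ)..(t - t₀), (t - τ) ^ (-(α + 1)) * τ ^ (α - 1)) := mul_left_comm _ _ _
    _ ≤ M * (2 / (α * t ^ α) + 2 ^ (1 - α) / (α * t₀ ^ α)) := by
        gcongr
        exact rpow_mul_integral_sub_rpow_neg_mul_rpow_le hα₀ hα₁ ht₀ (hT.trans ht)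
    _ ≤ M * (2 / (α * T ^ α) + 2 ^ (1 - α) / (α * t₀ ^ α)) := by gcongr

theorem aestronglyMeasurable_rpow_mul_norm_ML {s : ℕ} {α : ℝ} (hα : 0 < α) (β p : ℝ)
    (A : Matrix (Fin s) (Fin s) ℝ) :
    AEStronglyMeasurable fun u : ℝ ↦ u ^ p * ‖ML α β (u ^ α • A)‖ := by
  have power_measurable : Measurable fun u : ℝ ↦ u ^ p := by fun_prop
  have norm_continuous : Continuous fun u : ℝ ↦ ‖ML α β (u ^ α • A)‖ :=
    ((continuous_ML hα β).comp ((Real.continuous_rpow_const hα.le).smul continuous_const)).norm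
  exact power_measurable.aestronglyMeasurable.mul norm_continuous.aestronglyMeasurable

theorem stmt3 (α : ℝ) (hα0 : 0 < α) (hα1 : α < 1) (s : ℕ)
    (A : Matrix (Fin s) (Fin s) ℝ) (t₀ M : ℝ) (ht₀ : 0 < t₀) (hM : 0 < M)
    (h : ∀ t ≥ t₀, t ^ (α - 1) * ‖ML α α (t ^ α • A)‖ ≤ M / t ^ (α + 1)) :
    ∀ T > 2 * t₀, ∀ t > T,
      t ^ (1 - α) * ∫ τ in (0:ℝ)..(t - t₀),
        (t - τ) ^ (α - 1) * ‖ML α α ((t - τ) ^ α • A)‖ * τ ^ (α - 1)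
      ≤ M * (2 / (α * T ^ α) + 2 ^ (1 - α) / (α * t₀ ^ α)) :=
  fun _ hT _ ht ↦ stmt3_general hα0 hα1.le ht₀ (aestronglyMeasurable_rpow_mul_norm_ML hα0 α _ A)
    (fun _ hu ↦ mul_nonneg (Real.rpow_nonneg (ht₀.le.trans hu) _) (norm_nonneg _)) h hT.le ht.le
end

section
/- Let 0 < α < 1 and γ > 0. Then for every t > 0 one has e^{-γt} ∫₀^t (t-τ)^{α-1} τ^{α-1} e^{γτ} dτ ≤ 2^{2-α} Γ(α) / (t^{1-α} γ^α). -/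
open Filter Topology MeasureTheory

/-!
Since `exp (-γ t) * exp (γ τ) = exp (-γ (t - τ))`, the integrand is
`(t - τ) ^ (α - 1) * τ ^ (α - 1) * exp (-γ (t - τ))`. On `(0, t/2]` the factor `(t - τ) ^ (α - 1)`
is at most `(t/2) ^ (α - 1)` and `exp (-γ (t - τ)) ≤ exp (-γ τ)`; on `[t/2, t)` the factor
`τ ^ (α - 1)` is at most `(t/2) ^ (α - 1)`. On either half what remains is a truncated Gamma
integral, at most `Γ(α) / γ ^ α`. The splitting uses only that the three factors are nonnegative
and antitone.
-/

section AntitoneConvolution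

open Set

variable {f g w : ℝ → ℝ} {t : ℝ}

theorem mul_comp_sub_le_of_antitoneOn (hf : AntitoneOn f (Ioo 0 t)) (hg : AntitoneOn g (Ioo 0 t))
    (hw : AntitoneOn w (Ioo 0 t)) (hf0 : ∀ x ∈ Ioo 0 t, 0 ≤ f x) (hg0 : ∀ x ∈ Ioo 0 t, 0 ≤ g x)
    (hw0 : ∀ x ∈ Ioo 0 t, 0 ≤ w x) {τ : ℝ} (hτ : τ ∈ Ioo 0 t) :
    f (t - τ) * g τ * w (t - τ) ≤
      f (t / 2) * (g τ * w τ) + g (t / 2) * (f (t - τ) * w (t - τ)) := by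
  have hsub : t - τ ∈ Ioo 0 t := ⟨sub_pos.2 hτ.2, sub_lt_self t hτ.1⟩
  have hmid : t / 2 ∈ Ioo 0 t := by constructor <;> linarith [hτ.1, hτ.2]
  have := hf0 _ hmid
  have := hg0 _ hmid
  have := hg0 τ hτ
  have := hw0 τ hτ
  have := hf0 _ hsub
  have := hw0 _ hsub
  rcases le_total τ (t / 2) with hle | hge
  · calc f (t - τ) * g τ * w (t - τ)
        ≤ f (t / 2) * g τ * w τ := by
          gcongr
          · exact hf hmid hsub (by linarith)
          · exact hw hτ hsub (by linarith)
      _ = f (t / 2) * (g τ * w τ) := mul_assoc _ _ _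
      _ ≤ _ := le_add_of_nonneg_right (by positivity)
  · calc f (t - τ) * g τ * w (t - τ)
        = g τ * (f (t - τ) * w (t - τ)) := by ring
      _ ≤ g (t / 2) * (f (t - τ) * w (t - τ)) := by
          gcongr
          exact hg hmid hτ hge
      _ ≤ _ := le_add_of_nonneg_left (by positivity)

theorem integral_mul_comp_sub_le_of_antitoneOn (ht : 0 ≤ t) (hf : AntitoneOn f (Ioo 0 t))
    (hg : AntitoneOn g (Ioo 0 t)) (hw : AntitoneOn w (Ioo 0 t)) (hf0 : ∀ x ∈ Ioo 0 t, 0 ≤ f x)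
    (hg0 : ∀ x ∈ Ioo 0 t, 0 ≤ g x) (hw0 : ∀ x ∈ Ioo 0 t, 0 ≤ w x)
    (hfw : IntervalIntegrable (fun x ↦ f x * w x) volume 0 t)
    (hgw : IntervalIntegrable (fun x ↦ g x * w x) volume 0 t) :
    ∫ τ in 0..t, f (t - τ) * g τ * w (t - τ) ≤
      f (t / 2) * (∫ x in 0..t, g x * w x) + g (t / 2) * ∫ x in 0..t, f x * w x := by
  have hfw_sub : IntervalIntegrable (fun τ ↦ f (t - τ) * w (t - τ)) volume 0 t := by
    simpa using (hfw.comp_sub_left t).symm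
  have hbound := (hgw.const_mul (f (t / 2))).add (hfw_sub.const_mul (g (t / 2)))
  calc ∫ τ in 0..t, f (t - τ) * g τ * w (t - τ)
      ≤ ∫ τ in 0..t, (f (t / 2) * (g τ * w τ) + g (t / 2) * (f (t - τ) * w (t - τ))) := by
        simp only [intervalIntegral.integral_of_le ht, integral_Ioc_eq_integral_Ioo]
        refine integral_mono_of_nonneg ?_
          ((intervalIntegrable_iff_integrableOn_Ioo_of_le ht).1 hbound) ?_
        · filter_upwards [ae_restrict_mem measurableSet_Ioo] with τ hτ
          have hsub : t - τ ∈ Ioo 0 t := ⟨sub_pos.2 hτ.2, sub_lt_self t hτ.1⟩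
          exact mul_nonneg (mul_nonneg (hf0 _ hsub) (hg0 τ hτ)) (hw0 _ hsub)
        · filter_upwards [ae_restrict_mem measurableSet_Ioo] with τ hτ
          exact mul_comp_sub_le_of_antitoneOn hf hg hw hf0 hg0 hw0 hτ
    _ = f (t / 2) * (∫ x in 0..t, g x * w x)
          + g (t / 2) * ∫ τ in 0..t, f (t - τ) * w (t - τ) := by
        rw [intervalIntegral.integral_add (hgw.const_mul _) (hfw_sub.const_mul _),
          intervalIntegral.integral_const_mul, intervalIntegral.integral_const_mul]
    _ = _ := by
        rw [intervalIntegral.integral_comp_sub_left (fun x ↦ f x * w x), sub_self, sub_zero]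

end AntitoneConvolution

section TruncatedGamma

open Set

variable {a γ t : ℝ}

theorem integrableOn_rpow_mul_exp_neg_mul_Ioi (ha : 0 < a) (hγ : 0 < γ) :
    IntegrableOn (fun x : ℝ ↦ x ^ (a - 1) * Real.exp (-(γ * x))) (Ioi 0) := by
  simpa using integrableOn_rpow_mul_exp_neg_mul_rpow (p := 1) (by linarith : -1 < a - 1) one_pos hγ

theorem intervalIntegrable_rpow_mul_exp_neg_mul (ha : 0 < a) (hγ : 0 < γ) (ht : 0 ≤ t) :
    IntervalIntegrable (fun x : ℝ ↦ x ^ (a - 1) * Real.exp (-(γ * x))) volume 0 t :=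
  (intervalIntegrable_iff_integrableOn_Ioc_of_le ht).2 <|
    (integrableOn_rpow_mul_exp_neg_mul_Ioi ha hγ).mono_set Ioc_subset_Ioi_self

theorem integral_rpow_mul_exp_neg_mul_le (ha : 0 < a) (hγ : 0 < γ) (ht : 0 ≤ t) :
    ∫ x in 0..t, x ^ (a - 1) * Real.exp (-(γ * x)) ≤ (1 / γ) ^ a * Real.Gamma a := by
  rw [intervalIntegral.integral_of_le ht, ← Real.integral_rpow_mul_exp_neg_mul_Ioi ha hγ]
  refine setIntegral_mono_set (integrableOn_rpow_mul_exp_neg_mul_Ioi ha hγ) ?_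
    Ioc_subset_Ioi_self.eventuallyLE
  filter_upwards [ae_restrict_mem measurableSet_Ioi] with x hx
  have : 0 < x := hx
  positivity

end TruncatedGamma

section ExponentialBeta

open Set

theorem antitoneOn_rpow_sub_one_Ioo {a : ℝ} (ha : a ≤ 1) (t : ℝ) :
    AntitoneOn (fun x : ℝ ↦ x ^ (a - 1)) (Ioo 0 t) :=
  (Real.antitoneOn_rpow_Ioi_of_exponent_nonpos (sub_nonpos.2 ha)).mono Ioo_subset_Ioi_self

variable {α β γ t : ℝ}

theorem exp_neg_mul_integral_rpow_mul_rpow_mul_exp_le (hα : 0 < α) (hα1 : α ≤ 1) (hβ : 0 < β)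
    (hβ1 : β ≤ 1) (hγ : 0 < γ) (ht : 0 ≤ t) :
    Real.exp (-(γ * t)) * ∫ τ in 0..t, (t - τ) ^ (α - 1) * τ ^ (β - 1) * Real.exp (γ * τ) ≤
      (t / 2) ^ (α - 1) * ((1 / γ) ^ β * Real.Gamma β) +
        (t / 2) ^ (β - 1) * ((1 / γ) ^ α * Real.Gamma α) := by
  have hexp : Antitone fun x : ℝ ↦ Real.exp (-(γ * x)) := fun x y hxy ↦ by
    dsimp only
    gcongr
  have hrpow0 (a : ℝ) : ∀ x ∈ Ioo 0 t, 0 ≤ x ^ (a - 1) := fun x hx ↦ Real.rpow_nonneg hx.1.le _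
  calc Real.exp (-(γ * t)) * ∫ τ in 0..t, (t - τ) ^ (α - 1) * τ ^ (β - 1) * Real.exp (γ * τ)
      = ∫ τ in 0..t, (t - τ) ^ (α - 1) * τ ^ (β - 1) * Real.exp (-(γ * (t - τ))) := by
        rw [← intervalIntegral.integral_const_mul]
        congr 1 with τ
        rw [mul_left_comm, ← Real.exp_add]
        ring_nf
    _ ≤ (t / 2) ^ (α - 1) * (∫ x in 0..t, x ^ (β - 1) * Real.exp (-(γ * x))) +
          (t / 2) ^ (β - 1) * ∫ x in 0..t, x ^ (α - 1) * Real.exp (-(γ * x)) :=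
        integral_mul_comp_sub_le_of_antitoneOn ht
          (antitoneOn_rpow_sub_one_Ioo hα1 t) (antitoneOn_rpow_sub_one_Ioo hβ1 t)
          (hexp.antitoneOn _) (hrpow0 α) (hrpow0 β) (fun _ _ ↦ (Real.exp_pos _).le)
          (intervalIntegrable_rpow_mul_exp_neg_mul hα hγ ht)
          (intervalIntegrable_rpow_mul_exp_neg_mul hβ hγ ht)
    _ ≤ _ := by
        gcongr
        · exact integral_rpow_mul_exp_neg_mul_le hβ hγ ht
        · exact integral_rpow_mul_exp_neg_mul_le hα hγ ht

end ExponentialBeta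

theorem two_mul_div_two_rpow_sub_one {t : ℝ} (ht : 0 ≤ t) (α : ℝ) :
    2 * (t / 2) ^ (α - 1) = 2 ^ (2 - α) / t ^ (1 - α) := by
  have htwo : (2 : ℝ) ^ (2 - α) = 2 * 2 ^ (1 - α) := by
    rw [mul_comm, ← Real.rpow_add_one two_ne_zero]
    ring_nf
  rw [htwo, ← neg_sub 1 α, Real.rpow_neg (by positivity), Real.div_rpow ht two_pos.le, inv_div,
    mul_div_assoc]

theorem stmt5 (α γ : ℝ) (hα0 : 0 < α) (hα1 : α < 1) (hγ : 0 < γ) :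
    ∀ t > (0:ℝ),
      Real.exp (-(γ * t)) * ∫ τ in (0:ℝ)..t, (t - τ) ^ (α - 1) * τ ^ (α - 1) * Real.exp (γ * τ)
        ≤ 2 ^ (2 - α) * Real.Gamma α / (t ^ (1 - α) * γ ^ α) := by
  intro t ht
  calc Real.exp (-(γ * t)) * ∫ τ in (0:ℝ)..t, (t - τ) ^ (α - 1) * τ ^ (α - 1) * Real.exp (γ * τ)
      ≤ (t / 2) ^ (α - 1) * ((1 / γ) ^ α * Real.Gamma α) +
          (t / 2) ^ (α - 1) * ((1 / γ) ^ α * Real.Gamma α) :=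
        exp_neg_mul_integral_rpow_mul_rpow_mul_exp_le hα0 hα1.le hα0 hα1.le hγ ht.le
    _ = 2 * (t / 2) ^ (α - 1) * (Real.Gamma α / γ ^ α) := by
        rw [one_div, Real.inv_rpow hγ.le]
        ring
    _ = 2 ^ (2 - α) * Real.Gamma α / (t ^ (1 - α) * γ ^ α) := by
        rw [two_mul_div_two_rpow_sub_one ht.le, div_mul_div_comm]
end

section
/- Let 0 < α < 1 and s ≥ 1. Suppose f : [0,∞) × ℝ^s → ℝ^s is continuous and there exists a bounded nonnegative function L : [0,∞) → [0,∞) such that ‖f(t,x) − f(t,y)‖ ≤ L(t) ‖x − y‖ for all t ∈ [0,∞) and x, y ∈ ℝ^s. Then for every x₀ ∈ ℝ^s and every T > 0, the integral equation x(t) = x₀ t^{α-1} + (1/Γ(α)) ∫₀^t (t-τ)^{α-1} f(τ, x(τ)) dτ has a unique solution x in C_{1-α}([0,T], ℝ^s); consequently the equation has a unique solution in C_{1-α}([0,∞), ℝ^s), and this solution satisfies lim_{t→0⁺} t^{1-α} x(t) = x₀. -/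
open Filter Topology MeasureTheory

/-- Membership in `C_{1-α}([0,T], ℝ^s)`: continuous on `(0,T]` and the limit
`lim_{t→0⁺} t^{1-α} x(t)` exists. -/
def memC (α : ℝ) {s : ℕ} (T : ℝ) (x : ℝ → (Fin s → ℝ)) : Prop :=
  ContinuousOn x (Set.Ioc 0 T) ∧
  ∃ l : Fin s → ℝ, Tendsto (fun t : ℝ => t ^ (1 - α) • x t) (𝓝[>] 0) (𝓝 l)

/-- Membership in `C_{1-α}([0,∞), ℝ^s)`: continuous on `(0,∞)` and the limit
`lim_{t→0⁺} t^{1-α} x(t)` exists. -/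
def memCinf (α : ℝ) {s : ℕ} (x : ℝ → (Fin s → ℝ)) : Prop :=
  ContinuousOn x (Set.Ioi 0) ∧
  ∃ l : Fin s → ℝ, Tendsto (fun t : ℝ => t ^ (1 - α) • x t) (𝓝[>] 0) (𝓝 l)

/-!
The Volterra operator `Φ x = t ^ (α - 1) x₀ + I^α f(·, x(·))` is a contraction of `C_{1-α}([0,T])`
for the weighted supremum norm with weight `exp (lam * t) * t ^ (α - 1)` once `lam` is large: since
`exp (-lam * u) ≤ (lam * u) ^ (-γ)` for `0 < γ < min α 1`, part of the singularity of the kernel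
`u ^ (α - 1)` can be given up for a factor `lam ^ (-γ)`, and what remains is a convergent Beta
integral. Banach's theorem yields the unique solution on `(0, T]`. The fixed point is a priori only
`O(t ^ (α - 1))`, but `t ^ (1 - α) I^α f(·, x(·))` tends to `0`, so the weighted limit exists and
equals `x₀`. By uniqueness the solutions on the intervals `(0, T]` are compatible and glue to a
solution on `(0, ∞)`.
-/

open Set Asymptotics ProbabilityTheory
open scoped NNReal BoundedContinuousFunction

section BetaKernel

variable {E : Type*} [NormedAddCommGroup E] [NormedSpace ℝ E] {a b t : ℝ}

lemma intervalIntegrable_beta_kernel_half (a : ℝ) (hb : 0 < b) (ht : 0 < t) :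
    IntervalIntegrable (fun τ : ℝ => (t - τ) ^ (a - 1) * τ ^ (b - 1)) volume 0 (t / 2) := by
  refine (intervalIntegral.intervalIntegrable_rpow' (by linarith)).continuousOn_mul
    (ContinuousOn.rpow_const (by fun_prop) fun τ hτ => Or.inl ?_)
  rw [uIcc_of_le (by positivity)] at hτ
  linarith [hτ.2]

lemma intervalIntegrable_beta_kernel (ha : 0 < a) (hb : 0 < b) (ht : 0 < t) :
    IntervalIntegrable (fun τ : ℝ => (t - τ) ^ (a - 1) * τ ^ (b - 1)) volume 0 t := by
  refine (intervalIntegrable_beta_kernel_half a hb ht).trans ?_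
  have reflected := ((intervalIntegrable_beta_kernel_half b ha ht).comp_sub_left t).symm
  simpa only [sub_sub_cancel, sub_zero, sub_half, mul_comm] using reflected

lemma integral_beta_kernel (ha : 0 < a) (hb : 0 < b) (ht : 0 < t) :
    ∫ τ in (0 : ℝ)..t, (t - τ) ^ (a - 1) * τ ^ (b - 1) = t ^ (a + b - 1) * beta a b := by
  have hbeta : Complex.betaIntegral b a = (beta a b : ℝ) := by
    rw [Complex.betaIntegral_eq_Gamma_mul_div _ _ (by simpa) (by simpa), beta, add_comm a,
      mul_comm (Real.Gamma a), ← Complex.ofReal_add]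
    simp only [Complex.Gamma_ofReal, Complex.ofReal_mul, Complex.ofReal_div]
  apply Complex.ofReal_injective
  rw [← intervalIntegral.integral_ofReal, Complex.ofReal_mul, ← hbeta,
    Complex.ofReal_cpow ht.le]
  push_cast
  rw [add_comm (a : ℂ), ← Complex.betaIntegral_scaled _ _ ht]
  refine intervalIntegral.integral_congr fun τ hτ => ?_
  rw [uIcc_of_le ht.le] at hτ
  rw [Complex.ofReal_cpow hτ.1, Complex.ofReal_cpow (sub_nonneg.2 hτ.2), mul_comm]
  push_cast
  rfl

lemma norm_integral_le_of_norm_le_beta_kernel (ha : 0 < a) (hb : 0 < b) (ht : 0 < t)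
    {F : ℝ → E} {B : ℝ}
    (hF : ∀ τ ∈ Ioo 0 t, ‖F τ‖ ≤ B * ((t - τ) ^ (a - 1) * τ ^ (b - 1))) :
    ‖∫ τ in (0 : ℝ)..t, F τ‖ ≤ B * (t ^ (a + b - 1) * beta a b) := by
  rw [← integral_beta_kernel ha hb ht, ← intervalIntegral.integral_const_mul]
  refine intervalIntegral.norm_integral_le_of_norm_le ht.le ?_
    ((intervalIntegrable_beta_kernel ha hb ht).const_mul B)
  filter_upwards [Measure.ae_ne volume t] with τ hne hτ
  exact hF τ ⟨hτ.1, hτ.2.lt_of_ne hne⟩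

lemma integral_sub_rpow_smul_eq_rpow_smul_integral (ht : 0 < t) (a : ℝ) (h : ℝ → E) :
    ∫ τ in (0 : ℝ)..t, (t - τ) ^ (a - 1) • h τ =
      t ^ a • ∫ σ in (0 : ℝ)..1, (1 - σ) ^ (a - 1) • h (t * σ) := by
  have substitution := intervalIntegral.smul_integral_comp_mul_left (a := 0) (b := 1)
    (fun τ => (t - τ) ^ (a - 1) • h τ) t
  rw [mul_zero, mul_one] at substitution
  have hpow : t ^ a = t * t ^ (a - 1) := by
    rw [Real.rpow_sub_one ht.ne', mul_div_cancel₀ _ ht.ne']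
  rw [← substitution, hpow, mul_smul, ← intervalIntegral.integral_smul (t ^ (a - 1))]
  congr 1
  refine intervalIntegral.integral_congr fun σ hσ => ?_
  rw [uIcc_of_le zero_le_one] at hσ
  simp only [smul_smul]
  rw [← Real.mul_rpow ht.le (sub_nonneg.2 hσ.2), mul_sub, mul_one]

end BetaKernel

/-- The weighted space `C_w(S)` of functions that are continuous on `S` and bounded there by a
multiple of the weight `w`. -/
structure ContinuousBigOOn {X E : Type*} [TopologicalSpace X] [NormedAddCommGroup E]
    (w : X → ℝ) (S : Set X) (x : X → E) : Prop where
  continuousOn : ContinuousOn x S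
  isBigO : x =O[𝓟 S] w

namespace ContinuousBigOOn

variable {X E : Type*} [TopologicalSpace X] [NormedAddCommGroup E] {w w' : X → ℝ} {S : Set X}
  {x y : X → E}

lemma exists_norm_le (hx : ContinuousBigOOn w S x) (hw : ∀ t ∈ S, 0 ≤ w t) :
    ∃ B ≥ 0, ∀ t ∈ S, ‖x t‖ ≤ B * w t := by
  obtain ⟨B, hB, hxB⟩ := hx.isBigO.exists_nonneg
  refine ⟨B, hB, fun t ht => ?_⟩
  simpa only [Real.norm_of_nonneg (hw t ht)] using isBigOWith_principal.1 hxB t ht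

lemma trans_isBigO (hx : ContinuousBigOOn w S x) (hw : w =O[𝓟 S] w') :
    ContinuousBigOOn w' S x :=
  ⟨hx.continuousOn, hx.isBigO.trans hw⟩

lemma add (hx : ContinuousBigOOn w S x) (hy : ContinuousBigOOn w S y) :
    ContinuousBigOOn w S (fun t => x t + y t) :=
  ⟨hx.continuousOn.add hy.continuousOn, hx.isBigO.add hy.isBigO⟩

lemma sub (hx : ContinuousBigOOn w S x) (hy : ContinuousBigOOn w S y) :
    ContinuousBigOOn w S (fun t => x t - y t) :=
  ⟨hx.continuousOn.sub hy.continuousOn, hx.isBigO.sub hy.isBigO⟩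

variable [NormedSpace ℝ E]

lemma exists_eq_smul_boundedContinuousFunction (hw : ContinuousOn w S) (hpos : ∀ t ∈ S, 0 < w t)
    (hx : ContinuousBigOOn w S x) : ∃ v : S →ᵇ E, ∀ t : S, x t = w t • v t := by
  obtain ⟨B, -, hB⟩ := hx.exists_norm_le fun t ht => (hpos t ht).le
  have hcont : Continuous fun t : S => (w t)⁻¹ • x t :=
    continuousOn_iff_continuous_domRestrict.1
      ((hw.inv₀ fun t ht => (hpos t ht).ne').smul hx.continuousOn)
  refine ⟨.ofNormedAddCommGroup _ hcont B fun t => ?_, fun t => ?_⟩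
  · rw [norm_smul, norm_inv, Real.norm_of_nonneg (hpos t t.2).le, inv_mul_le_iff₀ (hpos t t.2),
      mul_comm]
    exact hB t t.2
  · exact (smul_inv_smul₀ (hpos t t.2).ne' _).symm

lemma exists_of_boundedContinuousFunction (hw : ContinuousOn w S) (v : S →ᵇ E) :
    ∃ x : X → E, ContinuousBigOOn w S x ∧ ∀ t : S, x t = w t • v t := by
  set x : X → E := fun t => w t • Function.extend Subtype.val v 0 t
  have hx : ∀ t : S, x t = w t • v t := fun t => by
    simp only [x, Subtype.val_injective.extend_apply]
  refine ⟨x, ⟨continuousOn_iff_continuous_domRestrict.2 ?_, isBigO_principal.2 ⟨‖v‖, ?_⟩⟩, hx⟩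
  · exact ((continuousOn_iff_continuous_domRestrict.1 hw).smul v.continuous).congr
      fun t => (hx t).symm
  · intro t ht
    rw [hx ⟨t, ht⟩, norm_smul, mul_comm]
    gcongr
    exact v.norm_coe_le_norm _

end ContinuousBigOOn

/-- `Φ` maps the weighted space `C_w(S)` to itself and is `K`-Lipschitz, `K < 1`, for the weighted
supremum norm `sup_{t ∈ S} ‖x t‖ / w t`. -/
structure IsWeightedContraction {X E : Type*} [TopologicalSpace X] [NormedAddCommGroup E]
    (K : ℝ≥0) (w : X → ℝ) (S : Set X) (Φ : (X → E) → X → E) : Prop where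
  lt_one : K < 1
  mapsTo {x : X → E} : ContinuousBigOOn w S x → ContinuousBigOOn w S (Φ x)
  norm_sub_le {x y : X → E} : ContinuousBigOOn w S x → ContinuousBigOOn w S y →
    ∀ M ≥ 0, (∀ t ∈ S, ‖x t - y t‖ ≤ M * w t) → ∀ t ∈ S, ‖Φ x t - Φ y t‖ ≤ K * M * w t

namespace IsWeightedContraction

variable {X E : Type*} [TopologicalSpace X] [NormedAddCommGroup E] [NormedSpace ℝ E] {K : ℝ≥0}
  {w : X → ℝ} {S : Set X} {Φ : (X → E) → X → E}

theorem exists_eqOn [CompleteSpace E] (hΦ : IsWeightedContraction K w S Φ)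
    (hw : ContinuousOn w S) (hpos : ∀ t ∈ S, 0 < w t) :
    ∃ x, ContinuousBigOOn w S x ∧ EqOn x (Φ x) S := by
  choose lift hlift lift_apply using
    ContinuousBigOOn.exists_of_boundedContinuousFunction (E := E) hw
  choose Ψ hΨ using fun v =>
    (hΦ.mapsTo (hlift v)).exists_eq_smul_boundedContinuousFunction hw hpos
  have norm_smul_sub (u v : S →ᵇ E) (t : S) : ‖w t • u t - w t • v t‖ = ‖u t - v t‖ * w t := by
    rw [← smul_sub, norm_smul, Real.norm_of_nonneg (hpos t t.2).le, mul_comm]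
  have contracting : ContractingWith K Ψ := by
    refine ⟨hΦ.lt_one, LipschitzWith.of_dist_le_mul fun u v => ?_⟩
    refine (BoundedContinuousFunction.dist_le (by positivity)).2 fun t => ?_
    have lift_sub_le : ∀ τ ∈ S, ‖lift u τ - lift v τ‖ ≤ dist u v * w τ := fun τ hτ => by
      rw [lift_apply u ⟨τ, hτ⟩, lift_apply v ⟨τ, hτ⟩, norm_smul_sub u v ⟨τ, hτ⟩, ← dist_eq_norm]
      exact mul_le_mul_of_nonneg_right (BoundedContinuousFunction.dist_coe_le_dist _)
        (hpos τ hτ).le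
    have image_sub_le := hΦ.norm_sub_le (hlift u) (hlift v) _ dist_nonneg lift_sub_le t t.2
    rw [hΨ, hΨ, norm_smul_sub, ← dist_eq_norm] at image_sub_le
    exact le_of_mul_le_mul_right image_sub_le (hpos t t.2)
  set v := contracting.fixedPoint Ψ
  have hv : Ψ v = v := contracting.fixedPoint_isFixedPt
  refine ⟨lift v, hlift v, fun t ht => ?_⟩
  rw [hΨ v ⟨t, ht⟩, hv, lift_apply v ⟨t, ht⟩]

theorem eqOn (hΦ : IsWeightedContraction K w S Φ) (hw : ContinuousOn w S)
    (hpos : ∀ t ∈ S, 0 < w t) {x y : X → E} (hx : ContinuousBigOOn w S x)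
    (hy : ContinuousBigOOn w S y) (hxΦ : EqOn x (Φ x) S) (hyΦ : EqOn y (Φ y) S) :
    EqOn x y S := by
  obtain ⟨v, hv⟩ := (hx.sub hy).exists_eq_smul_boundedContinuousFunction hw hpos
  have norm_sub_eq (t : S) : ‖x t - y t‖ = ‖v t‖ * w t := by
    rw [hv, norm_smul, Real.norm_of_nonneg (hpos t t.2).le, mul_comm]
  have sub_le : ∀ t ∈ S, ‖x t - y t‖ ≤ ‖v‖ * w t := fun t ht => by
    rw [norm_sub_eq ⟨t, ht⟩]
    exact mul_le_mul_of_nonneg_right (v.norm_coe_le_norm _) (hpos t ht).le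
  have norm_le : ‖v‖ ≤ K * ‖v‖ := by
    refine (BoundedContinuousFunction.norm_le (by positivity)).2 fun t => ?_
    have image_sub_le := hΦ.norm_sub_le hx hy _ (norm_nonneg v) sub_le t t.2
    rw [← hxΦ t.2, ← hyΦ t.2, norm_sub_eq] at image_sub_le
    exact le_of_mul_le_mul_right image_sub_le (hpos t t.2)
  have norm_eq_zero : ‖v‖ = 0 := by
    have : (K : ℝ) < 1 := mod_cast hΦ.lt_one
    nlinarith [norm_nonneg v]
  intro t ht
  simpa only [norm_eq_zero, zero_mul, norm_le_zero_iff, sub_eq_zero] using sub_le t ht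

end IsWeightedContraction

section RpowWeight

variable {E : Type*} [NormedAddCommGroup E] {α β T : ℝ}

lemma continuousOn_rpow_const_Ioi (p : ℝ) : ContinuousOn (fun t : ℝ => t ^ p) (Ioi 0) :=
  continuousOn_id.rpow_const fun _ ht => Or.inl (ne_of_gt ht)

lemma rpow_isBigO_rpow_Ioc {p q : ℝ} (hpq : p ≤ q) (T : ℝ) :
    (fun t : ℝ => t ^ q) =O[𝓟 (Ioc 0 T)] fun t => t ^ p := by
  refine isBigO_principal.2 ⟨T ^ (q - p), fun t ht => ?_⟩
  rw [Real.norm_of_nonneg (Real.rpow_nonneg ht.1.le _),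
    Real.norm_of_nonneg (Real.rpow_nonneg ht.1.le _), ← sub_add_cancel q p,
    Real.rpow_add ht.1, add_sub_cancel_right]
  exact mul_le_mul_of_nonneg_right (Real.rpow_le_rpow ht.1.le ht.2 (sub_nonneg.2 hpq))
    (Real.rpow_nonneg ht.1.le p)

lemma isBigO_one_of_tendsto_nhdsGT_zero (hT : 0 < T) {g : ℝ → E} {l : E}
    (hg : ContinuousOn g (Ioc 0 T)) (hl : Tendsto g (𝓝[>] 0) (𝓝 l)) :
    g =O[𝓟 (Ioc 0 T)] fun _ => (1 : ℝ) := by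
  have hcont : ContinuousOn (Function.update g 0 l) (Icc 0 T) := by
    rw [continuousOn_update_iff, Icc_sdiff_left, nhdsWithin_Ioc_eq_nhdsGT hT]
    exact ⟨hg, fun _ => hl⟩
  obtain ⟨B, hB⟩ := isCompact_Icc.exists_bound_of_continuousOn hcont
  refine isBigO_principal.2 ⟨B, fun t ht => ?_⟩
  simpa [Function.update_of_ne ht.1.ne'] using hB t (Ioc_subset_Icc_self ht)

variable [NormedSpace ℝ E]

lemma ContinuousBigOOn.of_tendsto_rpow_smul (hT : 0 < T) {x : ℝ → E} {l : E}
    (hx : ContinuousOn x (Ioc 0 T))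
    (hl : Tendsto (fun t : ℝ => t ^ (1 - α) • x t) (𝓝[>] 0) (𝓝 l)) :
    ContinuousBigOOn (fun t => t ^ (α - 1)) (Ioc 0 T) x := by
  refine ⟨hx, ?_⟩
  have weighted_bounded := isBigO_one_of_tendsto_nhdsGT_zero hT
    (((continuousOn_rpow_const_Ioi _).mono Ioc_subset_Ioi_self).smul hx) hl
  refine ((isBigO_refl (fun t : ℝ => t ^ (α - 1)) _).smul weighted_bounded).congr' ?_ ?_
  · refine eventually_principal.2 fun t ht => ?_
    simp only [Pi.smul_apply', smul_smul]
    rw [← Real.rpow_add ht.1, sub_add_sub_cancel, sub_self, Real.rpow_zero, one_smul]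
  · exact eventually_principal.2 fun t _ => by simp only [smul_eq_mul, mul_one]

lemma ContinuousBigOOn.tendsto_rpow_smul_zero (hT : 0 < T) (hαβ : α < β) {h : ℝ → E}
    (hh : ContinuousBigOOn (fun t => t ^ (β - 1)) (Ioc 0 T) h) :
    Tendsto (fun t : ℝ => t ^ (1 - α) • h t) (𝓝[>] 0) (𝓝 0) := by
  have hbigO := hh.isBigO.mono (le_principal_iff.2 (Ioc_mem_nhdsGT hT))
  refine ((isBigO_refl (fun t : ℝ => t ^ (1 - α)) _).smul hbigO).trans_tendsto ?_
  have hlim : Tendsto (fun t : ℝ => t ^ (β - α)) (𝓝[>] 0) (𝓝 0) := by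
    have := (Real.continuousAt_rpow_const 0 (β - α) (Or.inr (sub_nonneg.2 hαβ.le))).tendsto
    rw [Real.zero_rpow (sub_pos.2 hαβ).ne'] at this
    exact this.mono_left nhdsWithin_le_nhds
  refine hlim.congr' (eventually_mem_nhdsWithin.mono fun t ht => ?_)
  simp only [smul_eq_mul]
  rw [← Real.rpow_add ht, sub_add_sub_cancel']

end RpowWeight

/-- The Riemann–Liouville fractional integral `I^α_{0+} h` of order `α`, evaluated at `t`. -/
noncomputable def fractionalIntegral {E : Type*} [NormedAddCommGroup E] [NormedSpace ℝ E]
    (α : ℝ) (h : ℝ → E) (t : ℝ) : E :=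
  (Real.Gamma α)⁻¹ • ∫ τ in (0 : ℝ)..t, (t - τ) ^ (α - 1) • h τ

section FractionalIntegral

variable {E : Type*} [NormedAddCommGroup E] [NormedSpace ℝ E] {α β T t : ℝ} {h g : ℝ → E}

lemma norm_sub_rpow_smul_le {a τ B : ℝ} (hτ : τ ≤ t) (hB : ‖h τ‖ ≤ B * τ ^ (β - 1)) :
    ‖(t - τ) ^ (a - 1) • h τ‖ ≤ B * ((t - τ) ^ (a - 1) * τ ^ (β - 1)) := by
  have hkernel := Real.rpow_nonneg (sub_nonneg.2 hτ) (a - 1)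
  rw [norm_smul, Real.norm_of_nonneg hkernel, mul_left_comm]
  gcongr

lemma ContinuousBigOOn.intervalIntegrable_sub_rpow_smul (hα : 0 < α) (hβ : 0 < β)
    (hh : ContinuousBigOOn (fun t => t ^ (β - 1)) (Ioc 0 T) h) (ht : t ∈ Ioc 0 T) :
    IntervalIntegrable (fun τ => (t - τ) ^ (α - 1) • h τ) volume 0 t := by
  obtain ⟨B, -, hB⟩ := hh.exists_norm_le fun τ hτ => Real.rpow_nonneg hτ.1.le _
  have hmeas : AEStronglyMeasurable h (volume.restrict (Ioc 0 t)) :=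
    (hh.continuousOn.mono (Ioc_subset_Ioc_right ht.2)).aestronglyMeasurable measurableSet_Ioc
  refine ((intervalIntegrable_beta_kernel hα hβ ht.1).const_mul B).mono_fun' ?_ ?_
  · rw [uIoc_of_le ht.1.le]
    exact (Measurable.aestronglyMeasurable (by fun_prop)).smul hmeas
  · rw [uIoc_of_le ht.1.le]
    filter_upwards [ae_restrict_mem measurableSet_Ioc] with τ hτ
    exact norm_sub_rpow_smul_le hτ.2 (hB τ ⟨hτ.1, hτ.2.trans ht.2⟩)

lemma fractionalIntegral_sub
    (hh : IntervalIntegrable (fun τ => (t - τ) ^ (α - 1) • h τ) volume 0 t)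
    (hg : IntervalIntegrable (fun τ => (t - τ) ^ (α - 1) • g τ) volume 0 t) :
    fractionalIntegral α (fun τ => h τ - g τ) t =
      fractionalIntegral α h t - fractionalIntegral α g t := by
  simp only [fractionalIntegral, ← smul_sub, ← intervalIntegral.integral_sub hh hg]

lemma fractionalIntegral_congr (ht : 0 < t) (hhg : EqOn h g (Ioc 0 t)) :
    fractionalIntegral α h t = fractionalIntegral α g t := by
  unfold fractionalIntegral
  congr 1
  refine intervalIntegral.integral_congr_ae (.of_forall fun τ hτ => ?_)
  rw [uIoc_of_le ht.le] at hτ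
  rw [hhg hτ]

lemma norm_fractionalIntegral_le_of_norm_le_rpow (hα : 0 < α) (hβ : 0 < β) (ht : 0 < t) {B : ℝ}
    (hB : ∀ τ ∈ Ioo 0 t, ‖h τ‖ ≤ B * τ ^ (β - 1)) :
    ‖fractionalIntegral α h t‖ ≤ (Real.Gamma α)⁻¹ * (B * (t ^ (α + β - 1) * beta α β)) := by
  have hΓ : 0 ≤ (Real.Gamma α)⁻¹ := inv_nonneg.2 (Real.Gamma_pos_of_pos hα).le
  rw [fractionalIntegral, norm_smul, Real.norm_of_nonneg hΓ]
  gcongr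
  exact norm_integral_le_of_norm_le_beta_kernel hα hβ ht fun τ hτ =>
    norm_sub_rpow_smul_le hτ.2.le (hB τ hτ)

lemma mul_mem_Ioc_zero {σ : ℝ} (ht : t ∈ Ioc 0 T) (hσ : σ ∈ Ioc (0 : ℝ) 1) :
    t * σ ∈ Ioc 0 T :=
  ⟨mul_pos ht.1 hσ.1, (mul_le_of_le_one_right ht.1.le hσ.2).trans ht.2⟩

lemma ContinuousBigOOn.continuousOn_integral_comp_mul (hα : 0 < α) (hβ : 0 < β)
    (hh : ContinuousBigOOn (fun t => t ^ (β - 1)) (Ioc 0 T) h) :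
    ContinuousOn (fun t => ∫ σ in (0 : ℝ)..1, (1 - σ) ^ (α - 1) • h (t * σ)) (Ioc 0 T) := by
  intro t₀ ht₀
  obtain ⟨B, hB0, hB⟩ := hh.exists_norm_le fun τ hτ => Real.rpow_nonneg hτ.1.le _
  have weight_le : ∀ᶠ t in 𝓝[Ioc 0 T] t₀, t ^ (β - 1) ≤ t₀ ^ (β - 1) + 1 :=
    (((continuousOn_rpow_const_Ioi _).mono Ioc_subset_Ioi_self) t₀ ht₀).eventually_le_const
      (lt_add_one _)
  refine intervalIntegral.continuousWithinAt_of_dominated_interval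
    (bound := fun σ => B * (t₀ ^ (β - 1) + 1) * ((1 - σ) ^ (α - 1) * σ ^ (β - 1)))
    ?_ ?_ ((intervalIntegrable_beta_kernel hα hβ one_pos).const_mul _) ?_
  · filter_upwards [self_mem_nhdsWithin] with t ht
    rw [uIoc_of_le zero_le_one]
    refine (Measurable.aestronglyMeasurable (by fun_prop)).smul ?_
    exact (hh.continuousOn.comp (by fun_prop) fun σ => mul_mem_Ioc_zero ht).aestronglyMeasurable
      measurableSet_Ioc
  · filter_upwards [self_mem_nhdsWithin, weight_le] with t ht hweight
    refine .of_forall fun σ hσ => ?_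
    rw [uIoc_of_le zero_le_one] at hσ
    refine norm_sub_rpow_smul_le (h := fun σ => h (t * σ)) hσ.2
      ((hB _ (mul_mem_Ioc_zero ht hσ)).trans ?_)
    have := Real.rpow_nonneg hσ.1.le (β - 1)
    rw [Real.mul_rpow ht.1.le hσ.1.le, mul_assoc]
    gcongr
  · refine .of_forall fun σ hσ => ?_
    rw [uIoc_of_le zero_le_one] at hσ
    refine continuousWithinAt_const.smul ?_
    exact (hh.continuousOn _ (mul_mem_Ioc_zero ht₀ hσ)).comp (f := fun t => t * σ) (by fun_prop)
      fun t ht => mul_mem_Ioc_zero ht hσ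

lemma ContinuousBigOOn.fractionalIntegral (hα : 0 < α) (hβ : 0 < β)
    (hh : ContinuousBigOOn (fun t => t ^ (β - 1)) (Ioc 0 T) h) :
    ContinuousBigOOn (fun t => t ^ (α + β - 1)) (Ioc 0 T) (fractionalIntegral α h) := by
  refine ⟨?_, ?_⟩
  · refine (ContinuousOn.const_smul (((continuousOn_rpow_const_Ioi α).mono
      Ioc_subset_Ioi_self).smul (hh.continuousOn_integral_comp_mul hα hβ)) (Real.Gamma α)⁻¹).congr
      fun t ht => ?_
    rw [_root_.fractionalIntegral, integral_sub_rpow_smul_eq_rpow_smul_integral ht.1]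
    rfl
  · obtain ⟨B, -, hB⟩ := hh.exists_norm_le fun τ hτ => Real.rpow_nonneg hτ.1.le _
    refine isBigO_principal.2 ⟨(Real.Gamma α)⁻¹ * (B * beta α β), fun t ht => ?_⟩
    have hle := norm_fractionalIntegral_le_of_norm_le_rpow hα hβ ht.1 fun τ hτ =>
      hB τ ⟨hτ.1, hτ.2.le.trans ht.2⟩
    rw [Real.norm_of_nonneg (Real.rpow_nonneg ht.1.le _)]
    convert hle using 1
    ring

end FractionalIntegral

/-- The weight `t ↦ exp (lam * t) * t ^ (α - 1)` of the Bielecki norm on `C_{1-α}`; the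
exponential factor is what turns the Volterra operator into a contraction when `lam` is large. -/
noncomputable def bieleckiWeight (α lam t : ℝ) : ℝ :=
  Real.exp (lam * t) * t ^ (α - 1)

section BieleckiWeight

variable {E : Type*} [NormedAddCommGroup E] [NormedSpace ℝ E] {α β γ lam T t : ℝ}

lemma bieleckiWeight_pos (ht : 0 < t) : 0 < bieleckiWeight α lam t :=
  mul_pos (Real.exp_pos _) (Real.rpow_pos_of_pos ht _)

lemma continuousOn_bieleckiWeight (α lam : ℝ) : ContinuousOn (bieleckiWeight α lam) (Ioi 0) :=
  ContinuousOn.mul (by fun_prop) (continuousOn_rpow_const_Ioi _)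

lemma rpow_isBigO_bieleckiWeight (hlam : 0 ≤ lam) (α T : ℝ) :
    (fun t => t ^ (α - 1)) =O[𝓟 (Ioc 0 T)] bieleckiWeight α lam := by
  refine isBigO_principal.2 ⟨1, fun t ht => ?_⟩
  rw [one_mul, bieleckiWeight, norm_mul]
  refine le_mul_of_one_le_left (norm_nonneg _) ?_
  rw [Real.norm_of_nonneg (Real.exp_pos _).le]
  exact Real.one_le_exp (mul_nonneg hlam ht.1.le)

lemma bieleckiWeight_isBigO_rpow (hlam : 0 ≤ lam) (α T : ℝ) :
    bieleckiWeight α lam =O[𝓟 (Ioc 0 T)] fun t => t ^ (α - 1) := by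
  refine isBigO_principal.2 ⟨Real.exp (lam * T), fun t ht => ?_⟩
  rw [bieleckiWeight, norm_mul, Real.norm_of_nonneg (Real.exp_pos _).le]
  gcongr
  exact ht.2

lemma rpow_le_exp {y : ℝ} (hγ0 : 0 ≤ γ) (hγ1 : γ ≤ 1) (hy : 0 ≤ y) : y ^ γ ≤ Real.exp y :=
  calc y ^ γ ≤ (y + 1) ^ γ := by gcongr; linarith
    _ ≤ (y + 1) ^ (1 : ℝ) := Real.rpow_le_rpow_of_exponent_le (by linarith) hγ1
    _ = y + 1 := Real.rpow_one _
    _ ≤ Real.exp y := Real.add_one_le_exp y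

lemma rpow_mul_exp_neg_le {u : ℝ} (hγ0 : 0 ≤ γ) (hγ1 : γ ≤ 1) (hlam : 0 < lam) (hu : 0 < u) :
    u ^ (α - 1) * Real.exp (-(lam * u)) ≤ lam ^ (-γ) * u ^ (α - γ - 1) := by
  have hexp : Real.exp (-(lam * u)) ≤ (lam * u) ^ (-γ) := by
    rw [Real.exp_neg, Real.rpow_neg (by positivity)]
    exact inv_anti₀ (by positivity) (rpow_le_exp hγ0 hγ1 (by positivity))
  calc u ^ (α - 1) * Real.exp (-(lam * u)) ≤ u ^ (α - 1) * (lam * u) ^ (-γ) := by gcongr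
    _ = lam ^ (-γ) * (u ^ (α - 1) * u ^ (-γ)) := by
      rw [Real.mul_rpow hlam.le hu.le, mul_left_comm]
    _ = lam ^ (-γ) * u ^ (α - γ - 1) := by
      rw [← Real.rpow_add hu, ← sub_eq_add_neg, sub_right_comm]

-- Trading the factor `(t - τ) ^ (-γ)` of the kernel against the exponential gains `lam ^ (-γ)`.
lemma norm_fractionalIntegral_le_of_norm_le_bieleckiWeight (hα : 0 < α) (hβ : 0 < β)
    (hγ0 : 0 ≤ γ) (hγ1 : γ ≤ 1) (hγα : γ < α) (hlam : 0 < lam) (ht : 0 < t) {h : ℝ → E} {D : ℝ}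
    (hD : 0 ≤ D) (hh : ∀ τ ∈ Ioo 0 t, ‖h τ‖ ≤ D * bieleckiWeight β lam τ) :
    ‖fractionalIntegral α h t‖ ≤ (Real.Gamma α)⁻¹ *
      (D * Real.exp (lam * t) * lam ^ (-γ) * (t ^ (α - γ + β - 1) * beta (α - γ) β)) := by
  have hΓ : 0 ≤ (Real.Gamma α)⁻¹ := inv_nonneg.2 (Real.Gamma_pos_of_pos hα).le
  rw [fractionalIntegral, norm_smul, Real.norm_of_nonneg hΓ]
  gcongr
  refine norm_integral_le_of_norm_le_beta_kernel (sub_pos.2 hγα) hβ ht fun τ hτ => ?_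
  have hu : 0 < t - τ := sub_pos.2 hτ.2
  have hτ0 : 0 < τ := hτ.1
  have hsplit : Real.exp (lam * τ) = Real.exp (lam * t) * Real.exp (-(lam * (t - τ))) := by
    rw [← Real.exp_add]; ring_nf
  calc ‖(t - τ) ^ (α - 1) • h τ‖
      = (t - τ) ^ (α - 1) * ‖h τ‖ := by
        rw [norm_smul, Real.norm_of_nonneg (by positivity)]
    _ ≤ (t - τ) ^ (α - 1) * (D * bieleckiWeight β lam τ) := by
        gcongr; exact hh τ hτ
    _ = D * Real.exp (lam * t) * ((t - τ) ^ (α - 1) * Real.exp (-(lam * (t - τ)))) *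
          τ ^ (β - 1) := by
        rw [bieleckiWeight, hsplit]; ring
    _ ≤ D * Real.exp (lam * t) * (lam ^ (-γ) * (t - τ) ^ (α - γ - 1)) * τ ^ (β - 1) := by
        gcongr D * Real.exp (lam * t) * ?_ * τ ^ (β - 1)
        exact rpow_mul_exp_neg_le hγ0 hγ1 hlam hu
    _ = D * Real.exp (lam * t) * lam ^ (-γ) * ((t - τ) ^ (α - γ - 1) * τ ^ (β - 1)) := by ring

lemma exists_forall_norm_fractionalIntegral_le_mul_bieleckiWeight (E : Type*)
    [NormedAddCommGroup E] [NormedSpace ℝ E] (hα : 0 < α) (T : ℝ) {ε : ℝ} (hε : 0 < ε) :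
    ∃ lam > 0, ∀ (h : ℝ → E), ∀ D ≥ 0,
      (∀ t ∈ Ioc 0 T, ‖h t‖ ≤ D * bieleckiWeight α lam t) →
      ∀ t ∈ Ioc 0 T, ‖fractionalIntegral α h t‖ ≤ ε * D * bieleckiWeight α lam t := by
  obtain ⟨γ, hγ0, hγ⟩ := exists_between (lt_min hα one_pos)
  obtain ⟨hγα, hγ1⟩ := lt_min_iff.1 hγ
  set c := (Real.Gamma α)⁻¹ * (T ^ (α - γ) * beta (α - γ) α)
  have hlim : Tendsto (fun lam : ℝ => lam ^ (-γ) * c) atTop (𝓝 0) := by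
    simpa using (tendsto_rpow_neg_atTop hγ0).mul_const c
  obtain ⟨lam, hlamε, hlam⟩ :=
    ((hlim.eventually_le_const hε).and (eventually_gt_atTop 0)).exists
  refine ⟨lam, hlam, fun h D hD hh t ht => ?_⟩
  have ht0 : 0 < t := ht.1
  have hbeta := beta_pos (sub_pos.2 hγα) hα
  have hpow : t ^ (α - γ) ≤ T ^ (α - γ) :=
    Real.rpow_le_rpow ht0.le ht.2 (sub_nonneg.2 hγα.le)
  calc ‖fractionalIntegral α h t‖
      ≤ (Real.Gamma α)⁻¹ * (D * Real.exp (lam * t) * lam ^ (-γ) *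
          (t ^ (α - γ + α - 1) * beta (α - γ) α)) :=
        norm_fractionalIntegral_le_of_norm_le_bieleckiWeight hα hα hγ0.le hγ1.le hγα hlam ht0 hD
          fun τ hτ => hh τ ⟨hτ.1, hτ.2.le.trans ht.2⟩
    _ = (Real.Gamma α)⁻¹ * (lam ^ (-γ) * (t ^ (α - γ) * beta (α - γ) α)) *
          (D * bieleckiWeight α lam t) := by
        rw [add_sub_assoc, Real.rpow_add ht0, bieleckiWeight]; ring
    _ ≤ (Real.Gamma α)⁻¹ * (lam ^ (-γ) * (T ^ (α - γ) * beta (α - γ) α)) *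
          (D * bieleckiWeight α lam t) := by
        have := (bieleckiWeight_pos (α := α) (lam := lam) ht0).le
        gcongr
    _ = lam ^ (-γ) * c * (D * bieleckiWeight α lam t) := by ring
    _ ≤ ε * (D * bieleckiWeight α lam t) := by
        have := (bieleckiWeight_pos (α := α) (lam := lam) ht0).le
        gcongr
    _ = ε * D * bieleckiWeight α lam t := by ring

end BieleckiWeight

section LipschitzComposition

variable {E : Type*} [NormedAddCommGroup E] {α T : ℝ} {f : ℝ → E → E} {K : ℝ≥0} {x : ℝ → E}

lemma exists_lipschitzWith_of_bddAbove {ι : Type*} {S : Set ι} {g : ι → E → E} {L : ι → ℝ}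
    (hL : BddAbove (L '' S)) (hg : ∀ t ∈ S, ∀ x y, ‖g t x - g t y‖ ≤ L t * ‖x - y‖) :
    ∃ K : ℝ≥0, ∀ t ∈ S, LipschitzWith K (g t) := by
  obtain ⟨C, hC⟩ := hL
  refine ⟨C.toNNReal, fun t ht => LipschitzWith.of_dist_le' fun x y => ?_⟩
  rw [dist_eq_norm, dist_eq_norm]
  exact (hg t ht x y).trans
    (mul_le_mul_of_nonneg_right (hC (mem_image_of_mem L ht)) (norm_nonneg _))

-- The exponent is `min α 1` because `f(·, 0)` is bounded, hence dominated by `t ^ (1 - 1)`.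
lemma ContinuousBigOOn.comp_lipschitzWith
    (hfc : ContinuousOn (Function.uncurry f) (Icc 0 T ×ˢ univ))
    (hLip : ∀ t ∈ Icc 0 T, LipschitzWith K (f t))
    (hx : ContinuousBigOOn (fun t => t ^ (α - 1)) (Ioc 0 T) x) :
    ContinuousBigOOn (fun t => t ^ (min α 1 - 1)) (Ioc 0 T) (fun t => f t (x t)) := by
  refine ⟨hfc.comp (continuousOn_id.prodMk hx.continuousOn)
    fun t ht => ⟨Ioc_subset_Icc_self ht, mem_univ _⟩, ?_⟩
  have hincrement : (fun t => f t (x t) - f t 0) =O[𝓟 (Ioc 0 T)] x :=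
    isBigO_principal.2 ⟨K, fun t ht => by
      simpa using (hLip t (Ioc_subset_Icc_self ht)).norm_sub_le (x t) 0⟩
  have hzero : (fun t => f t 0) =O[𝓟 (Ioc 0 T)] fun t : ℝ => t ^ ((1 : ℝ) - 1) := by
    obtain ⟨M, hM⟩ := isCompact_Icc.exists_bound_of_continuousOn
      (hfc.comp (f := fun t => (t, (0 : E))) (by fun_prop) fun t ht => ⟨ht, mem_univ _⟩)
    exact isBigO_principal.2 ⟨M, fun t ht => by simpa using hM t (Ioc_subset_Icc_self ht)⟩
  simpa using ((hincrement.trans hx.isBigO).trans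
    (rpow_isBigO_rpow_Ioc (sub_le_sub_right (min_le_left α 1) 1) T)).add
    (hzero.trans (rpow_isBigO_rpow_Ioc (sub_le_sub_right (min_le_right α 1) 1) T))

end LipschitzComposition

/-- The operator `x ↦ t ^ (α - 1) x₀ + I^α_{0+} (f(·, x(·)))` whose fixed points are the solutions
of the Riemann–Liouville initial value problem. -/
noncomputable def volterraMap {E : Type*} [NormedAddCommGroup E] [NormedSpace ℝ E]
    (α : ℝ) (f : ℝ → E → E) (x₀ : E) (x : ℝ → E) (t : ℝ) : E :=
  t ^ (α - 1) • x₀ + fractionalIntegral α (fun τ => f τ (x τ)) t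

section VolterraMap

variable {E : Type*} [NormedAddCommGroup E] [NormedSpace ℝ E] {α T : ℝ} {f : ℝ → E → E}
  {K : ℝ≥0} {x y : ℝ → E}

lemma volterraMap_congr {t : ℝ} (ht : 0 < t) (hxy : EqOn x y (Ioc 0 t)) (x₀ : E) :
    volterraMap α f x₀ x t = volterraMap α f x₀ y t := by
  rw [volterraMap, volterraMap, fractionalIntegral_congr ht fun τ hτ => by rw [hxy hτ]]

lemma continuousBigOOn_rpow_smul_const (α T : ℝ) (x₀ : E) :
    ContinuousBigOOn (fun t => t ^ (α - 1)) (Ioc 0 T) (fun t => t ^ (α - 1) • x₀) where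
  continuousOn :=
    ((continuousOn_rpow_const_Ioi _).mono Ioc_subset_Ioi_self).smul continuousOn_const
  isBigO := isBigO_principal.2 ⟨‖x₀‖, fun t _ => by rw [norm_smul, mul_comm]⟩

variable (hα : 0 < α) (hfc : ContinuousOn (Function.uncurry f) (Icc 0 T ×ˢ univ))
  (hLip : ∀ t ∈ Icc 0 T, LipschitzWith K (f t))
include hα hfc hLip

lemma ContinuousBigOOn.volterraMap (x₀ : E)
    (hx : ContinuousBigOOn (fun t => t ^ (α - 1)) (Ioc 0 T) x) :
    ContinuousBigOOn (fun t => t ^ (α - 1)) (Ioc 0 T) (volterraMap α f x₀ x) := by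
  have hmin : 0 < min α 1 := lt_min hα one_pos
  refine (continuousBigOOn_rpow_smul_const α T x₀).add ?_
  exact ((hx.comp_lipschitzWith hfc hLip).fractionalIntegral hα hmin).trans_isBigO
    (rpow_isBigO_rpow_Ioc (by linarith) T)

lemma tendsto_rpow_smul_of_eqOn_volterraMap (hT : 0 < T) {x₀ : E}
    (hx : ContinuousBigOOn (fun t => t ^ (α - 1)) (Ioc 0 T) x)
    (hsol : EqOn x (volterraMap α f x₀ x) (Ioc 0 T)) :
    Tendsto (fun t : ℝ => t ^ (1 - α) • x t) (𝓝[>] 0) (𝓝 x₀) := by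
  have hmin : 0 < min α 1 := lt_min hα one_pos
  have integral_vanishes := (((hx.comp_lipschitzWith hfc hLip).fractionalIntegral hα
    hmin).tendsto_rpow_smul_zero hT (lt_add_of_pos_right α hmin)).const_add x₀
  rw [add_zero] at integral_vanishes
  refine integral_vanishes.congr' ?_
  filter_upwards [Ioc_mem_nhdsGT hT] with t ht
  rw [hsol ht, volterraMap, smul_add, smul_smul, ← Real.rpow_add ht.1, sub_add_sub_cancel,
    sub_self, Real.rpow_zero, one_smul]

theorem exists_isWeightedContraction_volterraMap (x₀ : E) :
    ∃ lam > 0, IsWeightedContraction (1 / 2) (bieleckiWeight α lam) (Ioc 0 T)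
      (volterraMap α f x₀) := by
  obtain ⟨lam, hlam, hsmall⟩ := exists_forall_norm_fractionalIntegral_le_mul_bieleckiWeight E hα T
    (ε := (2 * ((K : ℝ) + 1))⁻¹) (by positivity)
  have to_rpow := bieleckiWeight_isBigO_rpow hlam.le α T
  have hmin : 0 < min α 1 := lt_min hα one_pos
  refine ⟨lam, hlam, one_half_lt_one, fun hx => ?_, fun {x y} hx hy M hM hxy t ht => ?_⟩
  · exact ((hx.trans_isBigO to_rpow).volterraMap hα hfc hLip x₀).trans_isBigO
      (rpow_isBigO_bieleckiWeight hlam.le α T)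
  have integrable {z : ℝ → E} (hz : ContinuousBigOOn (bieleckiWeight α lam) (Ioc 0 T) z) :=
    ((hz.trans_isBigO to_rpow).comp_lipschitzWith hfc hLip).intervalIntegrable_sub_rpow_smul
      hα hmin ht
  have increment_le : ∀ τ ∈ Ioc 0 T,
      ‖f τ (x τ) - f τ (y τ)‖ ≤ K * M * bieleckiWeight α lam τ := fun τ hτ =>
    calc ‖f τ (x τ) - f τ (y τ)‖ ≤ K * ‖x τ - y τ‖ :=
          (hLip τ (Ioc_subset_Icc_self hτ)).norm_sub_le _ _
      _ ≤ K * (M * bieleckiWeight α lam τ) := by gcongr; exact hxy τ hτ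
      _ = K * M * bieleckiWeight α lam τ := (mul_assoc _ _ _).symm
  have hfactor : (2 * ((K : ℝ) + 1))⁻¹ * K ≤ 1 / 2 := by
    rw [inv_mul_le_iff₀ (by positivity)]; linarith
  have hweight := (bieleckiWeight_pos (α := α) (lam := lam) ht.1).le
  calc ‖volterraMap α f x₀ x t - volterraMap α f x₀ y t‖
      = ‖fractionalIntegral α (fun τ => f τ (x τ) - f τ (y τ)) t‖ := by
        rw [volterraMap, volterraMap, add_sub_add_left_eq_sub,
          ← fractionalIntegral_sub (integrable hx) (integrable hy)]
    _ ≤ (2 * ((K : ℝ) + 1))⁻¹ * (K * M) * bieleckiWeight α lam t :=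
        hsmall _ _ (by positivity) increment_le t ht
    _ = (2 * ((K : ℝ) + 1))⁻¹ * K * (M * bieleckiWeight α lam t) := by ring
    _ ≤ 1 / 2 * (M * bieleckiWeight α lam t) := by gcongr
    _ = ((1 / 2 : ℝ≥0) : ℝ) * M * bieleckiWeight α lam t := by push_cast; ring

end VolterraMap

/-- `x` lies in `C_{1-α}` on `S` and solves the integral equation at every point of `S`. Taking
`S = (0, T]` or `S = (0, ∞)` gives the solutions in `C_{1-α}([0,T])` and `C_{1-α}([0,∞))`. -/
structure IsFractionalSolutionOn {E : Type*} [NormedAddCommGroup E] [NormedSpace ℝ E]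
    (α : ℝ) (f : ℝ → E → E) (x₀ : E) (S : Set ℝ) (x : ℝ → E) : Prop where
  continuousOn : ContinuousOn x S
  exists_tendsto : ∃ l, Tendsto (fun t : ℝ => t ^ (1 - α) • x t) (𝓝[>] 0) (𝓝 l)
  eqOn : EqOn x (volterraMap α f x₀ x) S

lemma isFractionalSolutionOn_iff {E : Type*} [NormedAddCommGroup E] [NormedSpace ℝ E]
    {α : ℝ} {f : ℝ → E → E} {x₀ : E} {S : Set ℝ} {x : ℝ → E} :
    IsFractionalSolutionOn α f x₀ S x ↔
      (ContinuousOn x S ∧ ∃ l, Tendsto (fun t : ℝ => t ^ (1 - α) • x t) (𝓝[>] 0) (𝓝 l)) ∧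
        EqOn x (volterraMap α f x₀ x) S :=
  ⟨fun ⟨hc, hl, heq⟩ => ⟨⟨hc, hl⟩, heq⟩, fun ⟨⟨hc, hl⟩, heq⟩ => ⟨hc, hl, heq⟩⟩

namespace IsFractionalSolutionOn

variable {E : Type*} [NormedAddCommGroup E] [NormedSpace ℝ E] {α T : ℝ} {f : ℝ → E → E}
  {x₀ : E} {S S' : Set ℝ} {x y : ℝ → E}

lemma mono (hx : IsFractionalSolutionOn α f x₀ S x) (hS : S' ⊆ S) :
    IsFractionalSolutionOn α f x₀ S' x :=
  ⟨hx.continuousOn.mono hS, hx.exists_tendsto, hx.eqOn.mono hS⟩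

lemma congr (hT : 0 < T) (hx : IsFractionalSolutionOn α f x₀ (Ioc 0 T) x)
    (hyx : EqOn y x (Ioc 0 T)) : IsFractionalSolutionOn α f x₀ (Ioc 0 T) y where
  continuousOn := hx.continuousOn.congr hyx
  exists_tendsto := by
    obtain ⟨l, hl⟩ := hx.exists_tendsto
    refine ⟨l, hl.congr' ?_⟩
    filter_upwards [Ioc_mem_nhdsGT hT] with t ht
    rw [hyx ht]
  eqOn t ht := by
    rw [hyx ht, hx.eqOn ht, volterraMap_congr ht.1 (hyx.mono (Ioc_subset_Ioc_right ht.2))]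

lemma Ioi_of_forall_Ioc (hx : ∀ T > 0, IsFractionalSolutionOn α f x₀ (Ioc 0 T) x) :
    IsFractionalSolutionOn α f x₀ (Ioi 0) x where
  continuousOn t ht :=
    ((hx (t + 1) (by linarith [mem_Ioi.1 ht])).continuousOn.continuousAt
      (Ioc_mem_nhds ht (lt_add_one t))).continuousWithinAt
  exists_tendsto := (hx 1 one_pos).exists_tendsto
  eqOn t ht := (hx t ht).eqOn ⟨ht, le_rfl⟩

-- By uniqueness the solutions on the intervals `(0, T]` agree, so `t ↦ X t t` extends them all.
lemma exists_Ioi_of_forall_Ioc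
    (hex : ∀ T > 0, ∃ x, IsFractionalSolutionOn α f x₀ (Ioc 0 T) x)
    (huniq : ∀ T > 0, ∀ x y, IsFractionalSolutionOn α f x₀ (Ioc 0 T) x →
      IsFractionalSolutionOn α f x₀ (Ioc 0 T) y → EqOn x y (Ioc 0 T)) :
    ∃ x, IsFractionalSolutionOn α f x₀ (Ioi 0) x := by
  choose! X hX using hex
  refine ⟨fun t => X t t, Ioi_of_forall_Ioc fun T hT => (hX T hT).congr hT fun t ht => ?_⟩
  exact huniq t ht.1 _ _ (hX t ht.1) ((hX T hT).mono (Ioc_subset_Ioc_right ht.2)) ⟨ht.1, le_rfl⟩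

lemma continuousBigOOn (hT : 0 < T) (hx : IsFractionalSolutionOn α f x₀ (Ioc 0 T) x) :
    ContinuousBigOOn (fun t => t ^ (α - 1)) (Ioc 0 T) x :=
  hx.exists_tendsto.elim fun _ => .of_tendsto_rpow_smul hT hx.continuousOn

section Lipschitz

variable {K : ℝ≥0} (hα : 0 < α) (hT : 0 < T)
  (hfc : ContinuousOn (Function.uncurry f) (Icc 0 T ×ˢ univ))
  (hLip : ∀ t ∈ Icc 0 T, LipschitzWith K (f t))
include hα hT hfc hLip

lemma tendsto (hx : IsFractionalSolutionOn α f x₀ (Ioc 0 T) x) :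
    Tendsto (fun t : ℝ => t ^ (1 - α) • x t) (𝓝[>] 0) (𝓝 x₀) :=
  tendsto_rpow_smul_of_eqOn_volterraMap hα hfc hLip hT (hx.continuousBigOOn hT) hx.eqOn

theorem exists_Ioc [CompleteSpace E] (x₀ : E) :
    ∃ x, IsFractionalSolutionOn α f x₀ (Ioc 0 T) x := by
  obtain ⟨lam, hlam, hΦ⟩ := exists_isWeightedContraction_volterraMap hα hfc hLip x₀
  obtain ⟨x, hx, hsol⟩ := hΦ.exists_eqOn
    ((continuousOn_bieleckiWeight α lam).mono Ioc_subset_Ioi_self)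
    fun t ht => bieleckiWeight_pos ht.1
  exact ⟨x, hx.continuousOn, ⟨x₀, tendsto_rpow_smul_of_eqOn_volterraMap hα hfc hLip hT
    (hx.trans_isBigO (bieleckiWeight_isBigO_rpow hlam.le α T)) hsol⟩, hsol⟩

theorem eqOn_Ioc (hx : IsFractionalSolutionOn α f x₀ (Ioc 0 T) x)
    (hy : IsFractionalSolutionOn α f x₀ (Ioc 0 T) y) : EqOn x y (Ioc 0 T) := by
  obtain ⟨lam, hlam, hΦ⟩ := exists_isWeightedContraction_volterraMap hα hfc hLip x₀
  have to_bielecki := rpow_isBigO_bieleckiWeight hlam.le α T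
  exact hΦ.eqOn ((continuousOn_bieleckiWeight α lam).mono Ioc_subset_Ioi_self)
    (fun t ht => bieleckiWeight_pos ht.1) ((hx.continuousBigOOn hT).trans_isBigO to_bielecki)
    ((hy.continuousBigOOn hT).trans_isBigO to_bielecki) hx.eqOn hy.eqOn

end Lipschitz

end IsFractionalSolutionOn

theorem stmt6_general {E : Type*} [NormedAddCommGroup E] [NormedSpace ℝ E] [CompleteSpace E]
    {α : ℝ} (hα : 0 < α) {f : ℝ → E → E}
    (hfc : ContinuousOn (Function.uncurry f) (Ici 0 ×ˢ univ))
    {L : ℝ → ℝ} (hL : ∀ T, BddAbove (L '' Icc 0 T))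
    (hLip : ∀ t, 0 ≤ t → ∀ x y, ‖f t x - f t y‖ ≤ L t * ‖x - y‖) (x₀ : E) :
    (∀ T > 0, ∃ x, IsFractionalSolutionOn α f x₀ (Ioc 0 T) x ∧
      ∀ y, IsFractionalSolutionOn α f x₀ (Ioc 0 T) y → EqOn y x (Ioc 0 T)) ∧
    ∃ x, IsFractionalSolutionOn α f x₀ (Ioi 0) x ∧
      (∀ y, IsFractionalSolutionOn α f x₀ (Ioi 0) y → EqOn y x (Ioi 0)) ∧
      Tendsto (fun t : ℝ => t ^ (1 - α) • x t) (𝓝[>] 0) (𝓝 x₀) := by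
  have hfcT (T : ℝ) : ContinuousOn (Function.uncurry f) (Icc 0 T ×ˢ univ) :=
    hfc.mono (prod_mono Icc_subset_Ici_self Subset.rfl)
  choose K hK using fun T => exists_lipschitzWith_of_bddAbove (hL T) fun t ht => hLip t ht.1
  have hex (T : ℝ) (hT : T > 0) : ∃ x, IsFractionalSolutionOn α f x₀ (Ioc 0 T) x :=
    IsFractionalSolutionOn.exists_Ioc hα hT (hfcT T) (hK T) x₀
  have huniq (T : ℝ) (hT : T > 0) (x y : ℝ → E) (hx : IsFractionalSolutionOn α f x₀ (Ioc 0 T) x)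
      (hy : IsFractionalSolutionOn α f x₀ (Ioc 0 T) y) : EqOn x y (Ioc 0 T) :=
    hx.eqOn_Ioc hα hT (hfcT T) (hK T) hy
  refine ⟨fun T hT => ?_, ?_⟩
  · obtain ⟨x, hx⟩ := hex T hT
    exact ⟨x, hx, fun y hy => huniq T hT y x hy hx⟩
  · obtain ⟨x, hx⟩ := IsFractionalSolutionOn.exists_Ioi_of_forall_Ioc hex huniq
    refine ⟨x, hx, fun y hy t ht => ?_, ?_⟩
    · exact huniq t ht y x (hy.mono Ioc_subset_Ioi_self) (hx.mono Ioc_subset_Ioi_self)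
        ⟨ht, le_rfl⟩
    · exact (hx.mono Ioc_subset_Ioi_self).tendsto hα one_pos (hfcT 1) (hK 1)

theorem stmt6 (α : ℝ) (hα0 : 0 < α) (hα1 : α < 1) (s : ℕ) (hs : 1 ≤ s)
    (f : ℝ → (Fin s → ℝ) → (Fin s → ℝ))
    (hfc : ContinuousOn (fun p : ℝ × (Fin s → ℝ) => f p.1 p.2)
      (Set.Ici 0 ×ˢ (Set.univ : Set (Fin s → ℝ))))
    (L : ℝ → ℝ) (hL0 : ∀ t : ℝ, 0 ≤ t → 0 ≤ L t) (hLbd : ∃ C : ℝ, ∀ t : ℝ, 0 ≤ t → L t ≤ C)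
    (hLip : ∀ t : ℝ, 0 ≤ t → ∀ x y : Fin s → ℝ, ‖f t x - f t y‖ ≤ L t * ‖x - y‖) :
    ∀ x₀ : Fin s → ℝ,
      -- for every `T > 0` the integral equation has a unique solution in `C_{1-α}([0,T], ℝ^s)`
      (∀ T > (0:ℝ), ∃ x : ℝ → (Fin s → ℝ),
        (memC α T x ∧ ∀ t ∈ Set.Ioc (0:ℝ) T,
          x t = t ^ (α - 1) • x₀ +
            (Real.Gamma α)⁻¹ • ∫ τ in (0:ℝ)..t, (t - τ) ^ (α - 1) • f τ (x τ)) ∧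
        (∀ y : ℝ → (Fin s → ℝ),
          (memC α T y ∧ ∀ t ∈ Set.Ioc (0:ℝ) T,
            y t = t ^ (α - 1) • x₀ +
              (Real.Gamma α)⁻¹ • ∫ τ in (0:ℝ)..t, (t - τ) ^ (α - 1) • f τ (y τ)) →
          ∀ t ∈ Set.Ioc (0:ℝ) T, y t = x t)) ∧
      -- consequently: a unique global solution in `C_{1-α}([0,∞), ℝ^s)`, whose weighted
      -- limit at `0⁺` is `x₀`
      ∃ x : ℝ → (Fin s → ℝ),
        (memCinf α x ∧ ∀ t > (0:ℝ),
          x t = t ^ (α - 1) • x₀ +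
            (Real.Gamma α)⁻¹ • ∫ τ in (0:ℝ)..t, (t - τ) ^ (α - 1) • f τ (x τ)) ∧
        (∀ y : ℝ → (Fin s → ℝ),
          (memCinf α y ∧ ∀ t > (0:ℝ),
            y t = t ^ (α - 1) • x₀ +
              (Real.Gamma α)⁻¹ • ∫ τ in (0:ℝ)..t, (t - τ) ^ (α - 1) • f τ (y τ)) →
          ∀ t > (0:ℝ), y t = x t) ∧
        Tendsto (fun t : ℝ => t ^ (1 - α) • x t) (𝓝[>] 0) (𝓝 x₀) := by
  intro x₀
  have hL (T : ℝ) : BddAbove (L '' Icc 0 T) :=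
    hLbd.imp fun _ hC => forall_mem_image.2 fun t ht => hC t ht.1
  have solution := stmt6_general hα0 hfc hL hLip x₀
  simp only [isFractionalSolutionOn_iff] at solution
  exact solution
end
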